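/- Let F be a field of characteristic 2 and K a purely inseparable extension of F of exponent 1 (K² ⊆ F). Let n ≥ 1, let B = ⟨⟨a₁,…,aₙ⟩⟩_b with aᵢ ∈ F* be an n-fold bilinear Pfister form over F with associated totally singular quadratic form q = ⟨⟨a₁,…,aₙ⟩⟩ : x ↦ B(x,x), and choose k ≤ n and indices 1 ≤ i₁ < … < i_k ≤ n such that (q_K)_an ≅ (⟨⟨a_{i₁},…,a_{i_k}⟩⟩)_K; put B₀ = ⟨⟨a_{i₁},…,a_{i_k}⟩⟩_b. Let L = K(B) be the function field over K of the quadric q = 0. If dim B₀ = 1 then W_q(L/F) = W_q(K/F); if dim B₀ > 1 then W_q(L/F) = W_q(K/F) + B₀ ⊗ W_q(F). -/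

import Mathlib

/-!  A concrete coefficient-matrix model of (possibly singular) finite-dimensional
quadratic forms over a field, suitable for characteristic 2. -/

/-- Coefficient representation of a (finite-dimensional) quadratic form over a field `F`:
the form of dimension `dim` given by `q(x) = ∑ i j, c i j * x i * x j`. -/
structure QF (F : Type*) [Field F] : Type _ where
  dim : ℕ
  c : Matrix (Fin dim) (Fin dim) F

namespace QF

variable {F E : Type*} [Field F] [Field E]

/-- Evaluation of the quadratic form at a vector. -/
def eval (q : QF F) (x : Fin q.dim → F) : F :=
  ∑ i, ∑ j, q.c i j * x i * x j

/-- Scalar extension (base change) of a quadratic form along a ring homomorphism. -/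
def map (f : F →+* E) (q : QF F) : QF E :=
  ⟨q.dim, fun i j => f (q.c i j)⟩

/-- Orthogonal sum. -/
def orthSum (q q' : QF F) : QF F :=
  ⟨q.dim + q'.dim,
    Matrix.reindex finSumFinEquiv finSumFinEquiv (Matrix.fromBlocks q.c 0 0 q'.c)⟩

/-- Scaling `a • q`. -/
def smul (a : F) (q : QF F) : QF F := ⟨q.dim, a • q.c⟩

/-- The nonsingular binary quadratic form `[a,b] : (x,y) ↦ ax² + xy + by²`. -/
def bin (a b : F) : QF F := ⟨2, !![a, 1; 0, b]⟩

/-- The diagonal (totally singular) quadratic form `⟨a₁, …, aₙ⟩`. -/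
def diag {n : ℕ} (v : Fin n → F) : QF F := ⟨n, Matrix.diagonal v⟩

/-- The zero-dimensional quadratic form. -/
def nil : QF F := { dim := 0, c := 0 }

/-- The one-dimensional form `⟨1⟩`. -/
def unit : QF F := diag (fun _ : Fin 1 => (1 : F))

/-- Orthogonal sum of a list of forms. -/
def sumList (l : List (QF F)) : QF F := l.foldr orthSum nil

/-- `pfTensor [a₁,…,aₙ] q` is the tensor product `⟨⟨a₁,…,aₙ⟩⟩_b ⊗ q` of the bilinear
Pfister form `⟨⟨a₁,…,aₙ⟩⟩_b = ⟨1,a₁⟩_b ⊗ ⋯ ⊗ ⟨1,aₙ⟩_b` with the quadratic form `q`,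
via `⟨1,a⟩_b ⊗ q ≅ q ⊥ a·q`. -/
def pfTensor (l : List F) (q : QF F) : QF F :=
  l.foldr (fun a r => orthSum r (smul a r)) q

/-- The hyperbolic plane `ℍ ≅ [0,0]`. -/
def hypPlane : QF F := bin 0 0

/-- The orthogonal sum of `k` hyperbolic planes. -/
def hyp (k : ℕ) : QF F := sumList (List.replicate k hypPlane)

/-- The `l`-dimensional zero form `⟨0,…,0⟩`. -/
def zeros (l : ℕ) : QF F := diag (fun _ : Fin l => (0 : F))

/-- Isometry of quadratic forms. -/
def Isometric (q q' : QF F) : Prop :=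
  ∃ e : (Fin q.dim → F) ≃ₗ[F] (Fin q'.dim → F), ∀ x, q'.eval (e x) = q.eval x

/-- Anisotropy: the form has no nontrivial zero. -/
def Anisotropic (q : QF F) : Prop := ∀ x, q.eval x = 0 → x = 0

/-- A quadratic form is nonsingular if the radical of its polar form
`B_q(x,y) = q(x+y) - q(x) - q(y)` (with matrix `c + cᵀ`) is trivial. -/
def Nonsingular (q : QF F) : Prop := ∀ x, (q.c + q.c.transpose).mulVec x = 0 → x = 0

/-- A quadratic form is totally singular if its polar form vanishes identically. -/
def TotallySingular (q : QF F) : Prop := q.c + q.c.transpose = 0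

/-- A quadratic form is hyperbolic if it is isometric to an orthogonal sum of
hyperbolic planes. -/
def Hyperbolic (q : QF F) : Prop := ∃ k, Isometric q (hyp k)

/-- Witt equivalence: `q ~ q'` iff the anisotropic parts agree, equivalently the two
forms become isometric after adding suitable numbers of hyperbolic planes and zero
forms. -/
def WittEquiv (q q' : QF F) : Prop :=
  ∃ k k' l l', Isometric (orthSum q (orthSum (hyp k) (zeros l)))
    (orthSum q' (orthSum (hyp k') (zeros l')))

/-- `AnisoPartOf φ q` : `φ` is (isometric to) the anisotropic part of `q`, i.e. `φ` is
anisotropic and `q ≅ k × ℍ ⊥ φ ⊥ ⟨0,…,0⟩`. -/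
def AnisoPartOf (φ q : QF F) : Prop :=
  Anisotropic φ ∧ ∃ k l, Isometric q (orthSum (hyp k) (orthSum φ (zeros l)))

/-- `Dominates q' q` means `q ≺ q'`, i.e. `q'` dominates `q`: there is an injective
linear map `t` of the underlying spaces with `q' ∘ t = q`. -/
def Dominates (q' q : QF F) : Prop :=
  ∃ t : (Fin q.dim → F) →ₗ[F] (Fin q'.dim → F), Function.Injective t ∧
    ∀ x, q'.eval (t x) = q.eval x

/-- The affine quadric polynomial `∑ cᵢⱼ XᵢXⱼ` of a quadratic form. -/
noncomputable def toPoly (q : QF F) : MvPolynomial (Fin q.dim) F :=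
  ∑ i, ∑ j, MvPolynomial.C (q.c i j) * (MvPolynomial.X i * MvPolynomial.X j)

/-- The affine coordinate ring of the (reduced) quadric `q = 0`. -/
abbrev CoordRing (q : QF F) : Type _ :=
  MvPolynomial (Fin q.dim) F ⧸ (Ideal.span {q.toPoly}).radical

/-- The function field of the quadric `q = 0` (assuming the quadric is integral). -/
abbrev FunctionField (q : QF F) [IsDomain (CoordRing q)] : Type _ :=
  FractionRing (CoordRing q)

/-- The canonical ring homomorphism from a base field `F` into the function field of a
quadric defined over an extension field `K` of `F`. -/
noncomputable def toFunctionField {K : Type*} [Field K] [Algebra F K] (q : QF K)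
    [IsDomain (CoordRing q)] : F →+* FunctionField q :=
  (algebraMap (CoordRing q) (FunctionField q)).comp
    ((algebraMap K (CoordRing q)).comp (algebraMap F K))

end QF


set_option linter.all false

namespace WK
open QuadraticMap Module

section A
variable {E : Type*} [Field E]
variable {V V1 V2 V3 : Type*} [AddCommGroup V] [Module E V] [FiniteDimensional E V]
  [AddCommGroup V1] [Module E V1] [FiniteDimensional E V1]
  [AddCommGroup V2] [Module E V2] [FiniteDimensional E V2]
  [AddCommGroup V3] [Module E V3] [FiniteDimensional E V3]

def Neu (Q : QuadraticForm E V) : Prop :=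
  ∃ U : Submodule E V, (∀ x ∈ U, Q x = 0) ∧ finrank E V ≤ 2 * finrank E U

def ND (Q : QuadraticForm E V) : Prop := ∀ x, (∀ y, polar Q x y = 0) → x = 0

lemma ND.nondeg {Q : QuadraticForm E V} (h : ND Q) :
    LinearMap.BilinForm.Nondegenerate (polarBilin Q) := by
  constructor
  · intro x hx; exact h x hx
  · intro x hx; exact h x (fun y => by rw [polar_comm]; exact hx y)

lemma polar_zero_of_iso {Q : QuadraticForm E V} {U : Submodule E V} (hU : ∀ x ∈ U, Q x = 0)
    {x y : V} (hx : x ∈ U) (hy : y ∈ U) : polar Q x y = 0 := by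
  simp [polar, hU _ (U.add_mem hx hy), hU _ hx, hU _ hy]

lemma ND.finrank_orth {Q : QuadraticForm E V} (h : ND Q) (W N : Submodule E V)
    (hWN : ∀ x ∈ W, ∀ y ∈ N, polar Q x y = 0) : finrank E W + finrank E N ≤ finrank E V := by
  have h1 := LinearMap.BilinForm.finrank_orthogonal h.nondeg W
  have h2 : N ≤ LinearMap.BilinForm.orthogonal (polarBilin Q) W := by
    intro y hy x hx
    exact hWN x hx y hy
  have h3 := Submodule.finrank_mono h2
  have h4 := Submodule.finrank_le W
  omega

lemma ND.lag_dim {Q : QuadraticForm E V} (h : ND Q) (U : Submodule E V) (hU : ∀ x ∈ U, Q x = 0) :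
    2 * finrank E U ≤ finrank E V := by
  have := h.finrank_orth U U (fun x hx y hy => polar_zero_of_iso hU hx hy)
  omega

/-- finrank of map in terms of kernel piece -/
lemma finrank_map_add (f : V →ₗ[E] V1) (U : Submodule E V) :
    finrank E (U.map f) + finrank E (U ⊓ LinearMap.ker f : Submodule E V) = finrank E U := by
  have h := LinearMap.finrank_range_add_finrank_ker (f.domRestrict U)
  have h1 : LinearMap.range (f.domRestrict U) = U.map f := by
    rw [LinearMap.range_domRestrict]
  have h2 : finrank E (LinearMap.ker (f.domRestrict U)) = finrank E (U ⊓ LinearMap.ker f : Submodule E V) := by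
    rw [LinearMap.ker_domRestrict]
    rw [← Submodule.finrank_map_subtype_eq]
    congr 2
    all_goals simp [Submodule.map_comap_subtype]
  rw [h1, h2] at h
  exact h

lemma finrank_subprod (U1 : Submodule E V1) (U2 : Submodule E V2) :
    finrank E (U1.prod U2) = finrank E U1 + finrank E U2 := by
  have e : (U1.prod U2) ≃ₗ[E] U1 × U2 := 
    { toFun := fun x => (⟨x.1.1, x.2.1⟩, ⟨x.1.2, x.2.2⟩)
      map_add' := fun x y => rfl
      map_smul' := fun c x => rfl
      invFun := fun x => ⟨(x.1.1, x.2.1), ⟨x.1.2, x.2.2⟩⟩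
      left_inv := fun x => rfl
      right_inv := fun x => rfl }
  rw [e.finrank_eq, finrank_prod]

theorem Neu.trans [CharP E 2] {Q1 : QuadraticForm E V1} {Q2 : QuadraticForm E V2} {Q3 : QuadraticForm E V3}
    (h2 : ND Q2) (h12 : Neu (Q1.prod Q2)) (h23 : Neu (Q2.prod Q3)) : Neu (Q1.prod Q3) := by
  obtain ⟨U1, hU1, d1⟩ := h12
  obtain ⟨U2, hU2, d2⟩ := h23
  let U : Submodule E ((V1 × V2) × (V2 × V3)) := U1.prod U2
  let p : ((V1 × V2) × (V2 × V3)) →ₗ[E] V2 :=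
    (LinearMap.snd E V1 V2).comp (LinearMap.fst E _ _) - (LinearMap.fst E V2 V3).comp (LinearMap.snd E _ _)
  let g : ((V1 × V2) × (V2 × V3)) →ₗ[E] (V1 × V3) :=
    ((LinearMap.fst E V1 V2).comp (LinearMap.fst E _ _)).prod ((LinearMap.snd E V2 V3).comp (LinearMap.snd E _ _))
  let m : ((V1 × V2) × (V2 × V3)) →ₗ[E] V2 := (LinearMap.snd E V1 V2).comp (LinearMap.fst E _ _)
  let W : Submodule E ((V1 × V2) × (V2 × V3)) := U ⊓ LinearMap.ker p
  have hUf : finrank E U = finrank E U1 + finrank E U2 := by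
    exact finrank_subprod _ _
  have e1 := finrank_map_add p U
  have e2 := finrank_map_add g W
  have e3 := finrank_map_add m (W ⊓ LinearMap.ker g)
  have e4 : (W ⊓ LinearMap.ker g) ⊓ LinearMap.ker m = ⊥ := by
    rw [eq_bot_iff]
    rintro ⟨⟨x, y⟩, ⟨y', z⟩⟩ ⟨⟨⟨_, h1⟩, h2⟩, h3⟩
    simp [p, g, m, sub_eq_zero] at h1 h2 h3
    simp_all
  have e5 := h2.finrank_orth (U.map p) ((W ⊓ LinearMap.ker g).map m) (by
    rintro _ ⟨⟨⟨x, y⟩, ⟨y', z⟩⟩, ⟨hx1, hx2⟩, rfl⟩ _ ⟨⟨⟨a, b⟩, ⟨b', c⟩⟩, ⟨⟨⟨hb1, hb2⟩, h1⟩, h2⟩, rfl⟩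
    simp [p, g, m, sub_eq_zero] at h1 h2
    obtain ⟨rfl, rfl⟩ := h2
    subst h1
    have i1 := polar_zero_of_iso hU1 hx1 hb1
    have i2 := polar_zero_of_iso hU2 hx2 hb2
    simp at i1 i2
    simp [p, m, sub_eq_add_neg, polar_add_left, polar_neg_left, i1, i2])
  rw [e4, finrank_bot] at e3
  refine ⟨W.map g, ?_, ?_⟩
  · rintro _ ⟨⟨⟨x, y⟩, ⟨y', z⟩⟩, ⟨⟨hx1, hx2⟩, h⟩, rfl⟩
    simp [p, sub_eq_zero] at h
    subst h
    have i1 := hU1 _ hx1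
    have i2 := hU2 _ hx2
    simp at i1 i2
    simp only [g, LinearMap.prod_apply, Function.prod_apply, LinearMap.comp_apply, LinearMap.fst_apply, LinearMap.snd_apply, prod_apply]
    have : (Q1 x + Q2 y) + (Q2 y + Q3 z) = 0 := by rw [i1, i2, add_zero]
    have h2 : Q2 y + Q2 y = 0 := CharTwo.add_self_eq_zero _
    linear_combination this - h2
  · rw [finrank_prod] at d1 d2 ⊢
    have : W = U ⊓ LinearMap.ker p := rfl
    rw [← this] at e1
    omega

lemma Neu.of_equiv {Q : QuadraticForm E V} {Q' : QuadraticForm E V1} (e : V ≃ₗ[E] V1)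
    (he : ∀ x, Q' (e x) = Q x) (h : Neu Q) : Neu Q' := by
  obtain ⟨U, hU, d⟩ := h
  refine ⟨U.map e.toLinearMap, ?_, ?_⟩
  · rintro _ ⟨x, hx, rfl⟩
    simpa [he] using hU x hx
  · rw [LinearEquiv.finrank_map_eq e U, ← e.finrank_eq]; exact d

lemma Neu.symm {Q1 : QuadraticForm E V1} {Q2 : QuadraticForm E V2} (h : Neu (Q1.prod Q2)) :
    Neu (Q2.prod Q1) :=
  h.of_equiv (LinearEquiv.prodComm E V1 V2) (by simp [add_comm])

/-- isometric injection-like graph: if `g : V1 → V2` linear with matching values and dims equal -/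
lemma Neu.graph [CharP E 2] {Q1 : QuadraticForm E V1} {Q2 : QuadraticForm E V2} (g : V1 →ₗ[E] V2)
    (hg : ∀ x, Q2 (g x) = Q1 x) (hd : finrank E V2 ≤ finrank E V1) : Neu (Q1.prod Q2) := by
  refine ⟨LinearMap.range (LinearMap.prod LinearMap.id g), ?_, ?_⟩
  · rintro _ ⟨x, rfl⟩
    simpa [hg] using CharTwo.add_self_eq_zero (Q1 x)
  · rw [LinearMap.finrank_range_of_inj, finrank_prod]
    · omega
    · intro x y h; simpa using congrArg Prod.fst h

lemma Neu.self [CharP E 2] (Q : QuadraticForm E V) : Neu (Q.prod Q) :=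
  Neu.graph LinearMap.id (fun _ => rfl) le_rfl

lemma Neu.prod [FiniteDimensional E V1] [FiniteDimensional E V2] {Q1 : QuadraticForm E V1} {Q2 : QuadraticForm E V2} (h1 : Neu Q1) (h2 : Neu Q2) :
    Neu (Q1.prod Q2) := by
  obtain ⟨U1, hU1, d1⟩ := h1
  obtain ⟨U2, hU2, d2⟩ := h2
  refine ⟨U1.prod U2, ?_, ?_⟩
  · rintro ⟨x, y⟩ ⟨hx, hy⟩
    simp [hU1 x hx, hU2 y hy]
  · rw [finrank_prod]
    have : finrank E (U1.prod U2) = finrank E U1 + finrank E U2 := finrank_subprod _ _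
    omega

/-- cancel a neutral form -/
lemma Neu.cancel [CharP E 2] {Q1 : QuadraticForm E V1} {Q2 : QuadraticForm E V2} (hn : ND Q2)
    (h : Neu (Q1.prod Q2)) (h2 : Neu Q2) : Neu Q1 := by
  have h3 : Neu (Q2.prod (0 : QuadraticForm E PUnit.{1})) :=
    h2.of_equiv (LinearEquiv.prodUnique (R := E) (M := V2) (M₂ := PUnit)).symm (by simp)
  exact (Neu.trans hn h h3).of_equiv (LinearEquiv.prodUnique (R := E) (M := V1) (M₂ := PUnit)) (by
    rintro ⟨x, y⟩; simp)

lemma ND.prod {Q1 : QuadraticForm E V1} {Q2 : QuadraticForm E V2} (h1 : ND Q1) (h2 : ND Q2) :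
    ND (Q1.prod Q2) := by
  rintro ⟨x, y⟩ h
  have a1 : x = 0 := h1 x (fun z => by simpa using h (z, 0))
  have a2 : y = 0 := h2 y (fun z => by simpa using h (0, z))
  simp [a1, a2]

lemma ND.of_equiv {Q : QuadraticForm E V} {Q' : QuadraticForm E V1} (e : V ≃ₗ[E] V1)
    (he : ∀ x, Q' (e x) = Q x) (h : ND Q) : ND Q' := by
  intro x hx
  have : e.symm x = 0 := by
    apply h
    intro y
    have := hx (e y)
    simpa [polar, ← he] using this
  simpa using this

lemma ND.fst {Q1 : QuadraticForm E V1} {Q2 : QuadraticForm E V2} (h : ND (Q1.prod Q2)) : ND Q1 := by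
  intro x hx
  have := h (x, 0) (by rintro ⟨y, z⟩; simp [hx])
  simpa using this

end A
end WK

namespace WK
open QuadraticMap Module

section B
variable {E : Type*} [Field E]
variable {V : Type*} [AddCommGroup V] [Module E V] [FiniteDimensional E V]

theorem Neu.exists_hyp {Q : QuadraticForm E V} (hn : ND Q) (h : Neu Q) :
    ∃ m : ℕ, ∃ e : ((Fin m → E) × (Fin m → E)) ≃ₗ[E] V, ∀ x y, Q (e (x, y)) = ∑ i, x i * y i := by
  obtain ⟨U, hU, d⟩ := h
  have d2 := hn.lag_dim U hU
  have d3 : finrank E V = 2 * finrank E U := by omega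
  let bs := finBasis E U
  let m := finrank E U
  let P : V →ₗ[E] (Fin m → E) := LinearMap.pi (fun i => polarBilin Q (bs i : V))
  have hker : LinearMap.ker P = LinearMap.BilinForm.orthogonal (polarBilin Q) U := by
    ext v
    constructor
    · intro hv u hu
      have h1 : ∀ i, polar Q (bs i : V) v = 0 := fun i => by
        have := congrFun (LinearMap.mem_ker.1 hv) i
        simpa [P] using this
      have h2 : (⟨u, hu⟩ : U) ∈ LinearMap.ker (((polarBilin Q).flip v).comp U.subtype) := by
        have : ((polarBilin Q).flip v).comp U.subtype = 0 := by
          apply bs.ext; intro i; simpa using h1 i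
        rw [this]; simp
      simpa using h2
    · intro hv
      ext i
      simpa [P] using hv (bs i : V) (bs i).2
  have hrange : LinearMap.range P = ⊤ := by
    apply Submodule.eq_top_of_finrank_eq
    have h1 := LinearMap.finrank_range_add_finrank_ker P
    rw [hker, LinearMap.BilinForm.finrank_orthogonal hn.nondeg] at h1
    rw [finrank_fin_fun]; omega
  obtain ⟨σ, hσ⟩ := LinearMap.exists_rightInverse_of_surjective P hrange
  have hσ' : ∀ y i, polar Q (bs i : V) (σ y) = y i := fun y i => by
    have := congrFun (LinearMap.congr_fun hσ y) i
    simpa [P] using this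
  obtain ⟨B, hB⟩ := LinearMap.BilinMap.toQuadraticMap_surjective (Q.comp σ)
  have hB' : ∀ y, B y y = Q (σ y) := fun y => by
    have := congrArg (fun q => q y) hB
    simpa using this
  let X : (Fin m → E) →ₗ[E] (Fin m → E) := LinearMap.pi (fun i => B.flip (Pi.single i 1))
  have hX : ∀ y, ∑ i, X y i * y i = Q (σ y) := fun y => by
    rw [← hB']
    conv_rhs => rw [pi_eq_sum_univ' y]
    conv_rhs => rw [← pi_eq_sum_univ' y]
    have : y = ∑ i, y i • (Pi.single i 1 : Fin m → E) := by
      ext j; simp [Finset.sum_apply, Pi.single_apply]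
    conv_rhs => arg 2; rw [this]
    rw [map_sum]
    refine Finset.sum_congr rfl fun i _ => ?_
    simp [X, mul_comm]
  let S : (Fin m → E) →ₗ[E] V := U.subtype.comp (bs.equivFun.symm : (Fin m → E) →ₗ[E] U)
  have hS : ∀ x, S x ∈ U := fun x => (bs.equivFun.symm x).2
  have hSp : ∀ x y, polar Q (S x) (σ y) = ∑ i, x i * y i := fun x y => by
    have : S x = ∑ i, x i • (bs i : V) := by
      simp [S, Basis.equivFun_symm_apply]; rfl
    rw [this]
    have := LinearMap.congr_fun (map_sum (polarBilin Q) (fun i => x i • (bs i : V)) Finset.univ) (σ y)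
    rw [← polarBilin_apply_apply, this]
    simp [hσ']
  let e0 : ((Fin m → E) × (Fin m → E)) →ₗ[E] V :=
    LinearMap.coprod S (σ - S.comp X)
  have he0 : ∀ x y, Q (e0 (x, y)) = ∑ i, x i * y i := fun x y => by
    have : e0 (x, y) = S (x - X y) + σ y := by simp [e0]; abel
    rw [this, QuadraticMap.map_add Q, hU _ (hS _), hSp, ← hX]
    simp [sub_mul]
  have hinj : Function.Injective e0 := by
    rw [← LinearMap.ker_eq_bot, eq_bot_iff]
    rintro ⟨x, y⟩ hxy
    have hxy : e0 (x, y) = 0 := hxy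
    have key : ∀ x' y', ∑ i, (x + x') i * (y + y') i = ∑ i, x' i * y' i := fun x' y' => by
      rw [← he0, ← he0, ← Prod.mk_add_mk, map_add, hxy, zero_add]
    have k0 : ∑ i, x i * y i = 0 := by rw [← he0, hxy]; simp
    have hx : x = 0 := by
      ext i
      have := key 0 (Pi.single i 1)
      simpa [mul_add, Finset.sum_add_distrib, Pi.single_apply, k0] using this
    have hy : y = 0 := by
      ext i
      have := key (Pi.single i 1) 0
      simpa [add_mul, Finset.sum_add_distrib, Pi.single_apply, k0] using this
    simp [hx, hy]
  refine ⟨m, LinearEquiv.ofInjectiveOfFinrankEq e0 hinj ?_, ?_⟩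
  · rw [finrank_prod, finrank_fin_fun]; omega
  · intro x y
    exact he0 x y

lemma span_iso {Q : QuadraticForm E V} {ι : Type*} {u : ι → V} (h1 : ∀ i, Q (u i) = 0)
    (h2 : ∀ i j, polar Q (u i) (u j) = 0) : ∀ x ∈ Submodule.span E (Set.range u), Q x = 0 := by
  have a1 : ∀ x ∈ Submodule.span E (Set.range u), ∀ i, polar Q x (u i) = 0 := by
    intro x hx i
    induction hx using Submodule.span_induction with
    | mem x hx => obtain ⟨j, rfl⟩ := hx; exact h2 j i
    | zero => simp
    | add x y _ _ hx hy => simp [polar_add_left, hx, hy]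
    | smul c x _ hx => simp [polar_smul_left, hx]
  have a2 : ∀ x ∈ Submodule.span E (Set.range u), ∀ y ∈ Submodule.span E (Set.range u), polar Q x y = 0 := by
    intro x hx y hy
    induction hy using Submodule.span_induction with
    | mem y hy => obtain ⟨j, rfl⟩ := hy; exact a1 x hx j
    | zero => simp
    | add y z _ _ hy hz => simp [polar_add_right, hy, hz]
    | smul c y _ hy => simp [polar_smul_right, hy]
  intro x hx
  induction hx using Submodule.span_induction with
  | mem x hx => obtain ⟨j, rfl⟩ := hx; exact h1 j
  | zero => simp
  | add x y hx hy hx' hy' => rw [QuadraticMap.map_add Q, hx', hy', a2 x hx y hy]; simp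
  | smul c x _ hx => simp [QuadraticMap.map_smul, hx]

end B

end WK

namespace WK
open QuadraticMap Module QF

section C
variable {F E : Type*} [Field F] [Field E]

noncomputable def toQ (q : QF F) : QuadraticForm F (Fin q.dim → F) :=
  LinearMap.BilinMap.toQuadraticMap (Matrix.toBilin' q.c)

lemma toQ_apply (q : QF F) (x : Fin q.dim → F) : toQ q x = q.eval x := by
  simp only [toQ, LinearMap.BilinMap.toQuadraticMap_apply, Matrix.toBilin'_apply, QF.eval]
  exact Finset.sum_congr rfl fun i _ => Finset.sum_congr rfl fun j _ => by ring

lemma polar_toQ (q : QF F) (x y : Fin q.dim → F) :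
    polar (toQ q) x y = ∑ i, ∑ j, q.c i j * x i * y j + ∑ i, ∑ j, q.c i j * y i * x j := by
  simp only [toQ, LinearMap.BilinMap.polar_toQuadraticMap, Matrix.toBilin'_apply]
  congr 1 <;>
  exact Finset.sum_congr rfl fun i _ => Finset.sum_congr rfl fun j _ => by ring

lemma polar_toQ' (q : QF F) (x y : Fin q.dim → F) :
    polar (toQ q) x y = ∑ i, ((q.c + q.c.transpose).mulVec x) i * y i := by
  rw [polar_toQ, add_comm]
  simp only [Matrix.mulVec, dotProduct, Matrix.add_apply, Matrix.transpose_apply, add_mul,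
    Finset.sum_add_distrib, Finset.sum_mul]
  congr 1
  · exact Finset.sum_congr rfl fun i _ => Finset.sum_congr rfl fun j _ => by ring
  · rw [Finset.sum_comm]

lemma nonsing_iff (q : QF F) : q.Nonsingular ↔ ND (toQ q) := by
  constructor
  · intro h x hx
    apply h
    ext i
    have := hx (Pi.single i 1)
    rw [polar_toQ'] at this
    simpa [Pi.single_apply] using this
  · intro h x hx
    apply h
    intro y
    rw [polar_toQ', hx]; simp

lemma nonsing_map {q : QF F} (h : q.Nonsingular) (f : F →+* E) : (q.map f).Nonsingular := by
  have h1 : (q.c + q.c.transpose).det ≠ 0 := by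
    intro h0
    obtain ⟨v, hv, hv'⟩ := Matrix.exists_mulVec_eq_zero_iff.2 h0
    exact hv (h v hv')
  have h2 : (f.mapMatrix (q.c + q.c.transpose)).det ≠ 0 := by
    rw [← RingHom.map_det]; simpa using h1
  intro x hx
  by_contra hne
  apply h2
  refine Matrix.exists_mulVec_eq_zero_iff.1 ⟨x, hne, ?_⟩
  have e : f.mapMatrix (q.c + q.c.transpose) = ((q.map f).c + (q.map f).c.transpose) := by
    ext i j
    exact map_add f _ _
  rw [e]
  exact hx

lemma ND.map {q : QF F} (h : ND (toQ q)) (f : F →+* E) : ND (toQ (q.map f)) :=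
  (nonsing_iff _).1 (nonsing_map ((nonsing_iff _).2 h) f)

/-- base change of vectors -/
def bv (q : QF F) (f : F →+* E) (x : Fin q.dim → F) : Fin (q.map f).dim → E := fun i => f (x i)

lemma toQ_bv (q : QF F) (f : F →+* E) (x : Fin q.dim → F) : toQ (q.map f) (bv q f x) = f (toQ q x) := by
  simp only [toQ_apply, QF.eval, map_sum, map_mul]
  rfl

lemma bv_add (q : QF F) (f : F →+* E) (x y) : bv q f (x + y) = bv q f x + bv q f y := by
  ext i; exact map_add f _ _

lemma bv_smul (q : QF F) (f : F →+* E) (c : F) (x) : bv q f (c • x) = f c • bv q f x := by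
  ext i; exact map_mul f _ _

lemma polar_bv (q : QF F) (f : F →+* E) (x y : Fin q.dim → F) :
    polar (toQ (q.map f)) (bv q f x) (bv q f y) = f (polar (toQ q) x y) := by
  simp only [polar, ← bv_add, toQ_bv, map_sub]

noncomputable def osE (q q' : QF F) :
    (Fin (q.orthSum q').dim → F) ≃ₗ[F] (Fin q.dim → F) × (Fin q'.dim → F) :=
  (LinearEquiv.funCongrLeft F F finSumFinEquiv).trans (LinearEquiv.sumArrowLequivProdArrow _ _ F F)

lemma osE_eval (q q' : QF F) (x) : toQ (q.orthSum q') x = ((toQ q).prod (toQ q')) (osE q q' x) := by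
  rw [prod_apply, toQ_apply, toQ_apply, toQ_apply]
  have : (orthSum q q').eval x = ∑ i : Fin (q.dim + q'.dim), ∑ j : Fin (q.dim + q'.dim),
    (orthSum q q').c i j * x i * x j := rfl
  rw [this, ← finSumFinEquiv.sum_comp]
  have h2 : ∀ i : Fin q.dim ⊕ Fin q'.dim, ∑ j : Fin (q.dim + q'.dim),
    (orthSum q q').c (finSumFinEquiv i) j * x (finSumFinEquiv i) * x j = 
    ∑ j : Fin q.dim ⊕ Fin q'.dim, (Matrix.fromBlocks q.c 0 0 q'.c) i j * x (finSumFinEquiv i) * x (finSumFinEquiv j) := by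
    intro i
    rw [← finSumFinEquiv.sum_comp]
    refine Finset.sum_congr rfl fun j _ => ?_
    simp [orthSum]
  simp only [h2, Fintype.sum_sum_type]
  simp only [Matrix.fromBlocks_apply₁₁, Matrix.fromBlocks_apply₁₂, Matrix.fromBlocks_apply₂₁,
    Matrix.fromBlocks_apply₂₂, Matrix.zero_apply, zero_mul, Finset.sum_const_zero, add_zero, zero_add]
  rfl

lemma osE_symm_eval (q q' : QF F) (x y) : toQ (q.orthSum q') ((osE q q').symm (x, y)) = toQ q x + toQ q' y := by
  rw [osE_eval]; simp

lemma Neu_orthSum {q q' : QF F} : Neu (toQ (q.orthSum q')) ↔ Neu ((toQ q).prod (toQ q')) :=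
  ⟨fun h => h.of_equiv (osE q q') (fun x => (osE_eval q q' x).symm),
   fun h => h.of_equiv (osE q q').symm (fun x => by rw [osE_eval]; simp)⟩

lemma ND_orthSum {q q' : QF F} : ND (toQ (q.orthSum q')) ↔ ND ((toQ q).prod (toQ q')) :=
  ⟨fun h => h.of_equiv (osE q q') (fun x => (osE_eval q q' x).symm),
   fun h => h.of_equiv (osE q q').symm (fun x => by rw [osE_eval]; simp)⟩

lemma map_orthSum (q q' : QF F) (f : F →+* E) : (q.orthSum q').map f = (q.map f).orthSum (q'.map f) := by
  unfold QF.map orthSum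
  congr 1
  ext i j
  obtain ⟨i, rfl⟩ := finSumFinEquiv.surjective i
  obtain ⟨j, rfl⟩ := finSumFinEquiv.surjective j
  simp only [Matrix.reindex_apply, Matrix.submatrix_apply, Equiv.symm_apply_apply]
  rcases i with i | i <;> rcases j with j | j
  · rfl
  · exact map_zero f
  · exact map_zero f
  · rfl

lemma map_smul' (a : F) (q : QF F) (f : F →+* E) : (q.smul a).map f = (q.map f).smul (f a) := by
  unfold QF.map QF.smul
  congr 1
  ext i j
  exact map_mul f _ _

lemma map_map {G : Type*} [Field G] (q : QF F) (f : F →+* E) (g : E →+* G) :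
    (q.map f).map g = q.map (g.comp f) := rfl

lemma toQ_smul (a : F) (q : QF F) (x : Fin q.dim → F) : toQ (q.smul a) x = a * toQ q x := by
  have h1 : toQ (q.smul a) x = ∑ i : Fin q.dim, ∑ j : Fin q.dim, a * q.c i j * x i * x j := toQ_apply _ _
  rw [h1, toQ_apply, QF.eval]
  simp only [Finset.mul_sum]
  exact Finset.sum_congr rfl fun i _ => Finset.sum_congr rfl fun j _ => by ring

lemma toQ_bin (a b : F) (x : Fin 2 → F) : toQ (bin a b) x = a * x 0 ^ 2 + x 0 * x 1 + b * x 1 ^ 2 := by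
  have h1 : toQ (bin a b) x = ∑ i : Fin 2, ∑ j : Fin 2, !![a, 1; 0, b] i j * x i * x j := toQ_apply _ _
  rw [h1]
  simp [Fin.sum_univ_two]
  ring

lemma pfTensor_cons (a : F) (l : List F) (q : QF F) :
    pfTensor (a :: l) q = (pfTensor l q).orthSum ((pfTensor l q).smul a) := rfl

lemma map_pfTensor (l : List F) (q : QF F) (f : F →+* E) :
    (pfTensor l q).map f = pfTensor (l.map f) (q.map f) := by
  induction l with
  | nil => rfl
  | cons a l ih => rw [List.map_cons, pfTensor_cons, pfTensor_cons, map_orthSum, map_smul', ih]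

lemma map_unit (f : F →+* E) : (QF.unit : QF F).map f = QF.unit := by
  unfold QF.map QF.unit QF.diag
  congr 1
  ext i j
  have : i = j := Subsingleton.elim _ _
  subst this
  simp

theorem Neu.map {q : QF F} (h : Neu (toQ q)) (f : F →+* E) : Neu (toQ (q.map f)) := by
  obtain ⟨U, hU, d⟩ := h
  let bs := finBasis F U
  let S : (Fin (finrank F U) → F) →ₗ[F] (Fin q.dim → F) :=
    U.subtype.comp (bs.equivFun.symm : (Fin (finrank F U) → F) →ₗ[F] U)
  have hSinj : Function.Injective S := U.subtype_injective.comp bs.equivFun.symm.injective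
  obtain ⟨g, hg⟩ := LinearMap.exists_leftInverse_of_injective S (LinearMap.ker_eq_bot.2 hSinj)
  have hgS : LinearMap.toMatrix' g * LinearMap.toMatrix' S = 1 := by
    rw [← LinearMap.toMatrix'_comp, hg, LinearMap.toMatrix'_id]
  have hgS' : (LinearMap.toMatrix' g).map f * (LinearMap.toMatrix' S).map f = 1 := by
    rw [← Matrix.map_mul, hgS]; simp
  let u : Fin (finrank F U) → (Fin (q.map f).dim → E) := fun i => bv q f (bs i : Fin q.dim → F)
  have hu : LinearIndependent E u := by
    rw [Fintype.linearIndependent_iff]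
    intro c hc
    have h0 : ((LinearMap.toMatrix' S).map f).mulVec c = 0 := by
      ext j
      have : ∑ i, (c i • u i) j = 0 := (Finset.sum_apply (M := fun _ : Fin q.dim => E) j Finset.univ (fun i => c i • u i)).symm.trans (congrFun hc j)
      rw [Matrix.mulVec, dotProduct]
      refine Eq.trans ?_ this
      refine Finset.sum_congr rfl fun i _ => ?_
      rw [Matrix.map_apply, LinearMap.toMatrix'_apply]
      have : S (Pi.single i 1) = bs i := by
        simp only [S, LinearMap.comp_apply]
        simp
      rw [this, mul_comm]
      rfl
    have h1 : c = ((LinearMap.toMatrix' g).map f).mulVec (((LinearMap.toMatrix' S).map f).mulVec c) := by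
      rw [Matrix.mulVec_mulVec, hgS', Matrix.one_mulVec]
    rw [h0, Matrix.mulVec_zero] at h1
    intro i; rw [h1]; rfl
  refine ⟨Submodule.span E (Set.range u), ?_, ?_⟩
  · apply span_iso
    · intro i; simp only [u]; rw [toQ_bv, hU _ (bs i).2, map_zero]
    · intro i j; simp only [u]; rw [polar_bv, polar_zero_of_iso hU (bs i).2 (bs j).2, map_zero]
  · rw [finrank_span_eq_card hu, finrank_fin_fun]
    rw [finrank_fin_fun] at d
    simp only [Fintype.card_fin]
    exact d

theorem Neu.map_prod {q q' : QF F} (h : Neu ((toQ q).prod (toQ q'))) (f : F →+* E) :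
    Neu ((toQ (q.map f)).prod (toQ (q'.map f))) := by
  have := (Neu_orthSum.2 h).map f
  rw [map_orthSum] at this
  exact Neu_orthSum.1 this

lemma isometric_of_Neu {q q' : QF F} (e : (Fin q.dim → F) ≃ₗ[F] (Fin q'.dim → F))
    (he : ∀ x, toQ q' (e x) = toQ q x) : Isometric q q' :=
  ⟨e, fun x => by simpa [toQ_apply] using he x⟩

lemma hyp_equiv (k : ℕ) : ∃ e : (Fin (hyp k : QF F).dim → F) ≃ₗ[F] (Fin k → F) × (Fin k → F),
    ∀ x, toQ (hyp k) x = ∑ i, (e x).1 i * (e x).2 i := by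
  induction k with
  | zero =>
    refine ⟨LinearEquiv.ofFinrankEq _ _ ?_, ?_⟩
    · rw [finrank_prod, finrank_fin_fun, finrank_fin_fun]; rfl
    · intro x
      have : x = 0 := by ext i; exact i.elim0
      simp [this]
  | succ k ih =>
    obtain ⟨e, he⟩ := ih
    let c := (Fin.consLinearEquiv F (fun _ : Fin (k+1) => F))
    refine ⟨(osE hypPlane (hyp k)).trans <|
      ((LinearEquiv.piFinTwo F (fun _ => F)).prodCongr e).trans <|
      (LinearEquiv.prodProdProdComm F F F (Fin k → F) (Fin k → F)).trans (c.prodCongr c), ?_⟩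
    intro x
    have h1 : toQ (hyp (k+1)) x = _ := osE_eval hypPlane (hyp k) x
    rw [h1, prod_apply, he, Fin.sum_univ_succ]
    congr 1
    refine (toQ_bin 0 0 _).trans ?_
    rw [zero_mul, zero_mul, zero_add, add_zero]
    rfl

lemma hyp_Neu (k : ℕ) : Neu (toQ (hyp k : QF F)) := by
  obtain ⟨e, he⟩ := hyp_equiv (F := F) k
  let Q : QuadraticForm F ((Fin k → F) × (Fin k → F)) := (toQ (hyp k)).comp e.symm.toLinearMap
  have hQ : Neu Q := by
    refine ⟨(⊤ : Submodule F (Fin k → F)).prod ⊥, ?_, ?_⟩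
    · rintro ⟨x, y⟩ ⟨_, hy⟩
      have hy : y = 0 := hy
      simp [Q, he, hy]
    · rw [finrank_subprod, finrank_prod]; simp; omega
  exact hQ.of_equiv e.symm (fun x => rfl)

lemma hyp_ND (k : ℕ) : ND (toQ (hyp k : QF F)) := by
  obtain ⟨e, he⟩ := hyp_equiv (F := F) k
  intro x hx
  have h : ∀ y, ∑ i, (e x + y).1 i * (e x + y).2 i = ∑ i, (e x).1 i * (e x).2 i + ∑ i, y.1 i * y.2 i := by
    intro y
    have := hx (e.symm y)
    simp only [polar, he, map_add, LinearEquiv.apply_symm_apply] at this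
    linear_combination this
  have : e x = 0 := by
    ext i
    · have := h (0, Pi.single i 1)
      simpa [mul_add, Finset.sum_add_distrib, Pi.single_apply] using this
    · have := h (Pi.single i 1, 0)
      simpa [add_mul, Finset.sum_add_distrib, Pi.single_apply] using this
  simpa using this

theorem hyperbolic_iff {q : QF F} (hq : ND (toQ q)) : Hyperbolic q ↔ Neu (toQ q) := by
  constructor
  · rintro ⟨k, e, he⟩
    exact (hyp_Neu k).of_equiv e.symm (fun x => by
      have := he (e.symm x); simp only [toQ_apply]; rw [← this]; simp)
  · intro h
    obtain ⟨m, e, he⟩ := h.exists_hyp hq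
    obtain ⟨e', he'⟩ := hyp_equiv (F := F) m
    exact ⟨m, isometric_of_Neu (e.symm.trans e'.symm) (fun x => by
      rw [he']
      have := he (e.symm x).1 (e.symm x).2
      simp at this
      simp [this])⟩

end C
end WK

namespace WK
open QuadraticMap Module QF

section D
variable {E : Type*} [Field E]
variable {W : Type*} [AddCommGroup W] [Module E W] [FiniteDimensional E W]

lemma toQ_unit (x : Fin 1 → E) : toQ (QF.unit : QF E) x = x 0 ^ 2 := by
  have h1 : toQ (QF.unit : QF E) x = ∑ i : Fin 1, ∑ j : Fin 1, (Matrix.diagonal (fun _ : Fin 1 => (1 : E))) i j * x i * x j := toQ_apply _ _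
  rw [h1]
  simp [pow_two]

lemma pf_cons (a : E) (l : List E) (q : QF E) (x) :
    toQ (pfTensor (a :: l) q) x =
      toQ (pfTensor l q) (osE (pfTensor l q) ((pfTensor l q).smul a) x).1
        + a * toQ (pfTensor l q) (osE (pfTensor l q) ((pfTensor l q).smul a) x).2 := by
  refine (osE_eval (pfTensor l q) ((pfTensor l q).smul a) x).trans ?_
  exact congrArg₂ (· + ·) rfl (toQ_smul a _ _)

/-- the structure equivalence for a cons -/
noncomputable def pcE (a : E) (l : List E) (q : QF E) :
    (Fin (pfTensor (a :: l) q).dim → E) ≃ₗ[E]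
      (Fin (pfTensor l q).dim → E) × (Fin (pfTensor l q).dim → E) :=
  osE (pfTensor l q) ((pfTensor l q).smul a)

lemma pcE_eval (a : E) (l : List E) (q : QF E) (x) : toQ (pfTensor (a :: l) q) x =
    toQ (pfTensor l q) (pcE a l q x).1 + a * toQ (pfTensor l q) (pcE a l q x).2 := pf_cons a l q x

lemma pcE_symm_eval (a : E) (l : List E) (q : QF E) (x y) :
    toQ (pfTensor (a :: l) q) ((pcE a l q).symm (x, y)) =
    toQ (pfTensor l q) x + a * toQ (pfTensor l q) y := by rw [pcE_eval]; simp

lemma pcE_polar (a : E) (l : List E) (q : QF E) (x y) : polar (toQ (pfTensor (a :: l) q)) x y =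
    polar (toQ (pfTensor l q)) (pcE a l q x).1 (pcE a l q y).1 +
      a * polar (toQ (pfTensor l q)) (pcE a l q x).2 (pcE a l q y).2 := by
  simp only [polar, pcE_eval, map_add, Prod.fst_add, Prod.snd_add]; ring

lemma pfTensor_ND {l : List E} (hl : ∀ a ∈ l, a ≠ 0) {q : QF E} (hq : ND (toQ q)) :
    ND (toQ (pfTensor l q)) := by
  induction l with
  | nil => exact hq
  | cons a l ih =>
    have ih := ih (fun b hb => hl b (by simp [hb]))
    intro x hx
    have h1 : (pcE a l q x).1 = 0 := ih _ (fun y => by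
      have := hx ((pcE a l q).symm (y, 0))
      rw [pcE_polar] at this
      simpa using this)
    have h2 : (pcE a l q x).2 = 0 := ih _ (fun y => by
      have := hx ((pcE a l q).symm (0, y))
      rw [pcE_polar] at this
      simpa [hl a (by simp)] using this)
    have : pcE a l q x = 0 := Prod.ext h1 h2
    simpa using this

/-- roundness step -/
lemma round_step [CharP E 2] (r : QuadraticForm E W) (a c1 c2 : E) (g1 g2 : W →ₗ[E] W)
    (h1 : ∀ v, r (g1 v) = c1 * r v) (h2 : ∀ v, r (g2 v) = c2 * r v) :
    ∃ G : (W × W) →ₗ[E] (W × W), ∀ v, r (G v).1 + a * r (G v).2 = (c1 + a * c2) * (r v.1 + a * r v.2) := by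
  by_cases hc1 : c1 = 0
  · refine ⟨LinearMap.prod (a • g2.comp (LinearMap.snd E W W)) (g2.comp (LinearMap.fst E W W)), ?_⟩
    rintro ⟨v, w⟩
    simp [QuadraticMap.map_smul, h2, hc1]; ring
  by_cases hc2 : c2 = 0
  · refine ⟨LinearMap.prod (g1.comp (LinearMap.fst E W W)) (g1.comp (LinearMap.snd E W W)), ?_⟩
    rintro ⟨v, w⟩
    simp [h1, hc2]; ring
  · let q : W × W →ₗ[E] W := (c1 * c2)⁻¹ • (g1.comp (g2.comp (LinearMap.snd E W W)))
    let p : W × W →ₗ[E] W := LinearMap.fst E W W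
    refine ⟨LinearMap.prod (g1.comp (p + (a * c2) • q)) (g2.comp (p + c1 • q)), ?_⟩
    rintro ⟨v, w⟩
    have hq : r (q (v, w)) = (c1 * c2)⁻¹ * r w := by
      simp [q, QuadraticMap.map_smul, h1, h2]; field_simp
    have e1 : r (g1 (v + (a * c2) • q (v, w))) = c1 * (r v + (a * c2) ^ 2 * ((c1 * c2)⁻¹ * r w) + (a * c2) * polar r v (q (v, w))) := by
      rw [h1, QuadraticMap.map_add r, QuadraticMap.map_smul, hq, polar_smul_right]
      simp only [smul_eq_mul]; ring
    have e2 : r (g2 (v + c1 • q (v, w))) = c2 * (r v + c1 ^ 2 * ((c1 * c2)⁻¹ * r w) + c1 * polar r v (q (v, w))) := by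
      rw [h2, QuadraticMap.map_add r, QuadraticMap.map_smul, hq, polar_smul_right]
      simp only [smul_eq_mul]; ring
    have h0 : a * c1 * c2 * polar r v (q (v, w)) + a * c1 * c2 * polar r v (q (v, w)) = 0 :=
      CharTwo.add_self_eq_zero _
    change r (g1 (v + (a * c2) • q (v, w))) + a * r (g2 (v + c1 • q (v, w))) = _
    rw [e1, e2]
    field_simp
    field_simp at h0
    linear_combination h0

theorem pf_round [CharP E 2] (l : List E) (τ : QF E) (x : Fin (pfTensor l QF.unit).dim → E) :
    ∃ g : (Fin (pfTensor l τ).dim → E) →ₗ[E] (Fin (pfTensor l τ).dim → E),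
      ∀ v, toQ (pfTensor l τ) (g v) = toQ (pfTensor l QF.unit) x * toQ (pfTensor l τ) v := by
  induction l with
  | nil =>
    refine ⟨(show Fin 1 → E from x) 0 • LinearMap.id, fun v => ?_⟩
    have : toQ (pfTensor [] QF.unit) x = (show Fin 1 → E from x) 0 ^ 2 := toQ_unit _
    rw [this]
    simp [QuadraticMap.map_smul, pow_two]
  | cons a l ih =>
    obtain ⟨g1, h1⟩ := ih (pcE a l _ x).1
    obtain ⟨g2, h2⟩ := ih (pcE a l _ x).2
    obtain ⟨G, hG⟩ := round_step _ a _ _ g1 g2 h1 h2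
    refine ⟨(pcE a l τ).symm.toLinearMap.comp (G.comp (pcE a l τ).toLinearMap), fun v => ?_⟩
    rw [pcE_eval, pcE_eval, pcE_eval, ← hG]
    simp

theorem pf_neutral [CharP E 2] (l : List E) (τ : QF E) (x : Fin (pfTensor l QF.unit).dim → E)
    (hx0 : x ≠ 0) (hx : toQ (pfTensor l QF.unit) x = 0) : Neu (toQ (pfTensor l τ)) := by
  induction l with
  | nil =>
    exfalso
    apply hx0
    have : toQ (pfTensor [] QF.unit) x = (show Fin 1 → E from x) 0 ^ 2 := toQ_unit _
    rw [this] at hx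
    have hx' : (show Fin 1 → E from x) 0 = 0 := by simpa using hx
    funext i
    have : i = (0 : Fin 1) := Subsingleton.elim (α := Fin 1) _ _
    rw [this]; exact hx'
  | cons a l ih =>
    set x1 := (pcE a l _ x).1 with hx1
    set x2 := (pcE a l _ x).2 with hx2
    rw [pcE_eval, ← hx1, ← hx2] at hx
    by_cases hc2 : toQ (pfTensor l QF.unit) x2 = 0
    · have hc1 : toQ (pfTensor l QF.unit) x1 = 0 := by simpa [hc2] using hx
      have hN : Neu (toQ (pfTensor l τ)) := by
        by_cases h1 : x1 = 0
        · by_cases h2 : x2 = 0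
          · exfalso; apply hx0
            have : pcE a l _ x = 0 := Prod.ext h1 h2
            simpa using this
          · exact ih x2 h2 hc2
        · exact ih x1 h1 hc1
      obtain ⟨U, hU, d⟩ := hN
      refine ⟨(U.prod U).map (pcE a l τ).symm.toLinearMap, ?_, ?_⟩
      · rintro _ ⟨⟨u, v⟩, ⟨hu, hv⟩, rfl⟩
        have := pcE_symm_eval a l τ u v
        simp only [hU u hu, hU v hv] at this
        simpa using this
      · have := finrank_subprod U U
        have e2 := LinearEquiv.finrank_map_eq (pcE a l τ).symm (U.prod U)
        have e3 := (pcE a l τ).finrank_eq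
        rw [finrank_prod] at e3
        have e4 : finrank E ↥(Submodule.map (pcE a l τ).symm.toLinearMap (U.prod U)) = finrank E (U.prod U) := e2
        omega
    · obtain ⟨g1, h1⟩ := pf_round l τ x1
      obtain ⟨g2, h2⟩ := pf_round l τ x2
      set c1 := toQ (pfTensor l QF.unit) x1
      set c2 := toQ (pfTensor l QF.unit) x2
      let m : (Fin (pfTensor l τ).dim → E) →ₗ[E] (Fin (pfTensor (a :: l) τ).dim → E) :=
        (pcE a l τ).symm.toLinearMap.comp (LinearMap.prod (c2⁻¹ • g1.comp g2) LinearMap.id)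
      refine ⟨LinearMap.range m, ?_, ?_⟩
      · rintro _ ⟨y, rfl⟩
        have := pcE_symm_eval a l τ (c2⁻¹ • g1 (g2 y)) y
        rw [QuadraticMap.map_smul, h1, h2] at this
        refine Eq.trans this ?_
        simp only [smul_eq_mul]
        field_simp
        linear_combination (toQ (pfTensor l τ) y) * hx
      · rw [LinearMap.finrank_range_of_inj]
        · have e3 := (pcE a l τ).finrank_eq
          rw [finrank_prod] at e3; omega
        · intro y y' h
          have := congrArg Prod.snd ((pcE a l τ).symm.injective h)
          simpa using this

/-- sublist embedding -/
lemma pf_sublist {l' l : List E} (h : l'.Sublist l) (τ : QF E) :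
    ∃ s : (Fin (pfTensor l' τ).dim → E) →ₗ[E] (Fin (pfTensor l τ).dim → E),
      ∀ x, toQ (pfTensor l τ) (s x) = toQ (pfTensor l' τ) x := by
  induction h with
  | slnil => exact ⟨LinearMap.id, fun _ => rfl⟩
  | @cons l₁ l₂ a _ ih =>
    obtain ⟨s, hs⟩ := ih
    refine ⟨(pcE a l₂ τ).symm.toLinearMap.comp (LinearMap.prod s 0), fun x => ?_⟩
    have := pcE_symm_eval a l₂ τ (s x) 0
    simp only [map_zero, mul_zero, add_zero, hs] at this
    exact this
  | @cons_cons l₁ l₂ a _ ih =>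
    obtain ⟨s, hs⟩ := ih
    refine ⟨(pcE a l₂ τ).symm.toLinearMap.comp ((LinearMap.prodMap s s).comp (pcE a l₁ τ).toLinearMap), fun x => ?_⟩
    have := pcE_symm_eval a l₂ τ (s (pcE a l₁ τ x).1) (s (pcE a l₁ τ x).2)
    rw [hs, hs, ← pcE_eval] at this
    exact this

lemma pf_eps (l : List E) :
    ∃ (χ : (Fin (pfTensor l QF.unit).dim → E) →ₗ[E] E) (e0 : Fin (pfTensor l QF.unit).dim → E),
      χ e0 = 1 ∧ toQ (pfTensor l QF.unit) e0 = 1 ∧ ∀ a c : E,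
      ∃ (ε : (Fin (pfTensor l QF.unit).dim → E) →ₗ[E] (Fin (pfTensor l (bin a c)).dim → E)) (f0 : Fin (pfTensor l (bin a c)).dim → E),
        (∀ x, toQ (pfTensor l (bin a c)) (ε x) = a * toQ (pfTensor l QF.unit) x) ∧
        toQ (pfTensor l (bin a c)) f0 = c ∧
        ∀ x, polar (toQ (pfTensor l (bin a c))) f0 (ε x) = χ x := by
  induction l with
  | nil =>
    refine ⟨LinearMap.proj (φ := fun _ : Fin 1 => E) 0, fun _ => 1, rfl, ?_, ?_⟩
    · exact (toQ_unit _).trans (by simp)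
    · intro a c
      let ε : (Fin 1 → E) →ₗ[E] (Fin 2 → E) :=
        { toFun := fun x => ![x 0, 0]
          map_add' := fun x y => by ext i; fin_cases i <;> simp
          map_smul' := fun c x => by ext i; fin_cases i <;> simp }
      refine ⟨ε, ![0, 1], fun x => ?_, ?_, fun x => ?_⟩
      · refine (toQ_bin a c _).trans ?_
        have : toQ (pfTensor [] QF.unit) x = (show Fin 1 → E from x) 0 ^ 2 := toQ_unit _
        rw [this]
        change a * x (0 : Fin 1) ^ 2 + x (0 : Fin 1) * 0 + c * 0 ^ 2 = a * x (0 : Fin 1) ^ 2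
        ring
      · refine (toQ_bin a c _).trans ?_
        simp
      · have e : polar (toQ (bin a c)) ![0, 1] (ε x) = toQ (bin a c) (![0, 1] + ε x) - toQ (bin a c) ![0, 1] - toQ (bin a c) (ε x) := rfl
        refine e.trans ?_
        rw [toQ_bin a c ![0, 1], toQ_bin a c (ε x)]
        have e2 := toQ_bin a c (![0, 1] + ε x)
        refine (congrArg (fun z => z - _ - _) e2).trans ?_
        change (a * (0 + x (0 : Fin 1)) ^ 2 + (0 + x (0 : Fin 1)) * (1 + 0) + c * (1 + 0) ^ 2)
          - (a * 0 ^ 2 + 0 * 1 + c * 1 ^ 2) - (a * x (0 : Fin 1) ^ 2 + x (0 : Fin 1) * 0 + c * 0 ^ 2) = x (0 : Fin 1)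
        ring
  | cons b l ih =>
    obtain ⟨χ, e0, h1, h2, h3⟩ := ih
    refine ⟨χ.comp ((LinearMap.fst E _ _).comp (pcE b l _).toLinearMap), (pcE b l _).symm (e0, 0), ?_, ?_, ?_⟩
    · simp [h1]
    · rw [pcE_symm_eval]; simp [h2]
    · intro a c
      obtain ⟨ε, f0, k1, k2, k3⟩ := h3 a c
      refine ⟨(pcE b l _).symm.toLinearMap.comp ((LinearMap.prodMap ε ε).comp (pcE b l _).toLinearMap),
        (pcE b l _).symm (f0, 0), ?_, ?_, ?_⟩
      · intro x
        have := pcE_symm_eval b l (bin a c) (ε (pcE b l _ x).1) (ε (pcE b l _ x).2)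
        refine Eq.trans this ?_
        rw [k1, k1, pcE_eval]; ring
      · rw [pcE_symm_eval]; simp [k2]
      · intro x
        rw [pcE_polar]
        simp [k3]

lemma pf_diag (l : List E) : ∃ i0, (pfTensor l QF.unit).c i0 i0 = 1 ∧
    ∀ i j, i ≠ j → (pfTensor l (QF.unit : QF E)).c i j = 0 := by
  induction l with
  | nil =>
    refine ⟨(0 : Fin 1), rfl, fun i j h => (h (Subsingleton.elim (α := Fin 1) i j)).elim⟩
  | cons a l ih =>
    obtain ⟨i0, h1, h2⟩ := ih
    rw [pfTensor_cons]
    generalize pfTensor l (QF.unit : QF E) = r at *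
    have key : ∀ i j : Fin r.dim ⊕ Fin r.dim, (r.orthSum (r.smul a)).c (finSumFinEquiv i) (finSumFinEquiv j)
      = Matrix.fromBlocks r.c 0 0 (a • r.c) i j := fun i j => by
        simp only [orthSum, QF.smul, Matrix.reindex_apply, Matrix.submatrix_apply]
        erw [Equiv.symm_apply_apply, Equiv.symm_apply_apply]
    refine ⟨finSumFinEquiv (m := r.dim) (n := r.dim) (Sum.inl i0), ?_, ?_⟩
    · exact (key _ _).trans h1
    · intro i j hij
      obtain ⟨i, rfl⟩ := (finSumFinEquiv (m := r.dim) (n := r.dim)).surjective i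
      obtain ⟨j, rfl⟩ := (finSumFinEquiv (m := r.dim) (n := r.dim)).surjective j
      refine (key _ _).trans ?_
      rcases i with i | i <;> rcases j with j | j
      · exact h2 i j (fun h => hij (by rw [h]))
      · rfl
      · rfl
      · change a * r.c i j = 0
        rw [h2 i j (fun h => hij (by rw [h])), mul_zero]

lemma toQ_diag {q : QF E} (h : ∀ i j, i ≠ j → q.c i j = 0) (x) : toQ q x = ∑ i, q.c i i * x i ^ 2 := by
  rw [toQ_apply, QF.eval]
  refine Finset.sum_congr rfl fun i _ => ?_
  rw [Finset.sum_eq_single i]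
  · ring
  · intro j _ hj; rw [h i j hj.symm]; ring
  · simp

lemma pf_orthSum (l : List E) (τ τ' : QF E) :
    ∃ e : (Fin (pfTensor l (τ.orthSum τ')).dim → E) ≃ₗ[E]
      (Fin (pfTensor l τ).dim → E) × (Fin (pfTensor l τ').dim → E),
      ∀ x, toQ (pfTensor l (τ.orthSum τ')) x = toQ (pfTensor l τ) (e x).1 + toQ (pfTensor l τ') (e x).2 := by
  induction l with
  | nil => exact ⟨osE τ τ', fun x => osE_eval τ τ' x⟩
  | cons a l ih =>
    obtain ⟨e, he⟩ := ih
    refine ⟨(pcE a l _).trans ((e.prodCongr e).trans ((LinearEquiv.prodProdProdComm E _ _ _ _).trans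
      ((pcE a l τ).symm.prodCongr (pcE a l τ').symm))), fun x => ?_⟩
    have h1 := pcE_symm_eval a l τ (e (pcE a l _ x).1).1 (e (pcE a l _ x).2).1
    have h2 := pcE_symm_eval a l τ' (e (pcE a l _ x).1).2 (e (pcE a l _ x).2).2
    rw [pcE_eval, he, he]
    refine Eq.trans ?_ (congrArg₂ (· + ·) h1.symm h2.symm)
    ring

end D
end WK

namespace WK
open QuadraticMap Module QF

section E1
variable {E : Type*} [Field E] [CharP E 2]
variable {V : Type*} [AddCommGroup V] [Module E V] [FiniteDimensional E V]

lemma polar_self2 (Q : QuadraticForm E V) (x : V) : polar Q x x = 0 := by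
  rw [polar_self, two_nsmul, CharTwo.add_self_eq_zero]

/-- orthogonal of a pair -/
def pairOrth (Q : QuadraticForm E V) (e g : V) : Submodule E V :=
  LinearMap.ker ((polarBilin Q e).prod (polarBilin Q g))

lemma mem_pairOrth (Q : QuadraticForm E V) (e g v : V) :
    v ∈ pairOrth Q e g ↔ polar Q e v = 0 ∧ polar Q g v = 0 := by
  simp [pairOrth]

lemma finrank_pairOrth (Q : QuadraticForm E V) (e g : V) (h : polar Q e g = 1) :
    finrank E (pairOrth Q e g) + 2 = finrank E V := by
  have h1 := LinearMap.finrank_range_add_finrank_ker ((polarBilin Q e).prod (polarBilin Q g))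
  have h2 : LinearMap.range ((polarBilin Q e).prod (polarBilin Q g)) = ⊤ := by
    rw [eq_top_iff]
    rintro ⟨a, b⟩ _
    refine ⟨a • g + b • e, ?_⟩
    simp [-polar_self, polar_add_right, polar_smul_right, h, polar_self2, polar_comm Q g e]
  rw [h2, finrank_top, finrank_prod, finrank_self] at h1
  rw [pairOrth]; omega

lemma decomp_pair (Q : QuadraticForm E V) (e g : V) (h : polar Q e g = 1) (v : V) :
    v - polar Q v g • e - polar Q v e • g ∈ pairOrth Q e g := by
  rw [mem_pairOrth]
  have : polar Q g e = 1 := by rw [polar_comm, h]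
  constructor
  · simp [-polar_self, polar_sub_right, polar_smul_right, h, polar_self2, polar_comm Q e v]
  · simp [-polar_self, polar_sub_right, polar_smul_right, this, polar_self2, polar_comm Q g v]
end E1

section E2
variable {F K : Type*} [Field F] [Field K] [CharP F 2] [CharP K 2]

/-- realize a configuration of vectors with values in `F` by a form over `F` -/
lemma exists_QF (f : F →+* K) {V : Type*} [AddCommGroup V] [Module K V] [FiniteDimensional K V]
    (Q : QuadraticForm K V) {m : ℕ} (u : Fin m → V) (α : Fin m → F) (β : Fin m → Fin m → F)
    (hα : ∀ i, f (α i) = Q (u i)) (hβ : ∀ i j, f (β i j) = polar Q (u i) (u j)) :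
    ∃ c : Matrix (Fin m) (Fin m) F, ∀ x : Fin m → K,
      toQ ((⟨m, c⟩ : QF F).map f) x = Q (Fintype.linearCombination K u x) := by
  let c : Matrix (Fin m) (Fin m) F := fun i j => if i = j then α i else if i < j then β i j else 0
  refine ⟨c, ?_⟩
  let φ : QF F := ⟨m, c⟩
  let j : (Fin m → K) →ₗ[K] V := Fintype.linearCombination K u
  let D : QuadraticForm K (Fin m → K) := (show QuadraticForm K (Fin m → K) from toQ (φ.map f)) - Q.comp j
  have hs : ∀ i : Fin m, j (Pi.single i 1) = u i := fun i => by
    simp [j, Fintype.linearCombination_apply, Pi.single_apply]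
  have hv : ∀ i : Fin m, toQ (φ.map f) (Pi.single i (1:K) : Fin m → K) = f (c i i) := fun i => by
    have : toQ (φ.map f) (Pi.single i (1:K) : Fin m → K) = ∑ i' : Fin m, ∑ j' : Fin m, f (c i' j') * (Pi.single i (1:K) : Fin m → K) i' * (Pi.single i (1:K) : Fin m → K) j' := toQ_apply _ _
    rw [this]
    simp [Pi.single_apply]
  have hp : ∀ i k : Fin m, polar (toQ (φ.map f)) (Pi.single i (1:K) : Fin m → K) (Pi.single k (1:K) : Fin m → K) = f (c i k) + f (c k i) := fun i k => by
    have : polar (toQ (φ.map f)) (Pi.single i (1:K) : Fin m → K) (Pi.single k (1:K) : Fin m → K) = 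
      ∑ i' : Fin m, ∑ j' : Fin m, f (c i' j') * (Pi.single i (1:K) : Fin m → K) i' * (Pi.single k (1:K) : Fin m → K) j'
      + ∑ i' : Fin m, ∑ j' : Fin m, f (c i' j') * (Pi.single k (1:K) : Fin m → K) i' * (Pi.single i (1:K) : Fin m → K) j' := polar_toQ _ _ _
    rw [this]
    simp [Pi.single_apply]
  have hD : ∀ x ∈ Submodule.span K (Set.range (fun i : Fin m => (Pi.single i (1:K) : Fin m → K))), D x = 0 := by
    apply span_iso
    · intro i
      have : D (Pi.single i (1:K)) = toQ (φ.map f) (Pi.single i (1:K) : Fin m → K) - Q (j (Pi.single i 1)) := rfl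
      rw [this, hv, hs, ← hα]; simp [c]
    · intro i k
      have : polar D (Pi.single i (1:K)) (Pi.single k 1) = polar (toQ (φ.map f)) (Pi.single i (1:K) : Fin m → K) (Pi.single k (1:K) : Fin m → K) - polar Q (j (Pi.single i 1)) (j (Pi.single k 1)) := by
        have hd : ∀ x, D x = toQ (φ.map f) x - Q (j x) := fun x => rfl
        simp only [polar, hd, map_add]
        have : ∀ a b c a' b' c' : K, a - a' - (b - b') - (c - c') = a - b - c - (a' - b' - c') := fun _ _ _ _ _ _ => by ring
        exact this _ _ _ _ _ _
      rw [this, hp, hs, hs]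
      rcases lt_trichotomy i k with h | h | h
      · have h' : ¬ k < i := not_lt.2 h.le
        simp [c, h, h', h.ne, h.ne', hβ]
      · subst h
        rw [polar_self2]; simp [CharTwo.add_self_eq_zero]
      · have h' : ¬ i < k := not_lt.2 h.le
        simp [c, h, h', h.ne, h.ne', hβ, polar_comm Q (u k)]
  intro x
  have hx : x ∈ Submodule.span K (Set.range (fun i : Fin m => (Pi.single i (1:K) : Fin m → K))) := by
    have : (fun i : Fin m => (Pi.single i (1:K) : Fin m → K)) = Pi.basisFun K (Fin m) := by
      ext i; simp
    rw [this, Basis.span_eq]; trivial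
  have := hD x hx
  exact sub_eq_zero.1 this

lemma bv_single (q : QF F) (f : F →+* K) (i : Fin q.dim) : bv q f (Pi.single (M := fun _ => F) i 1) =
    (Pi.single (M := fun _ : Fin q.dim => K) i 1) := by
  refine funext fun (k : Fin q.dim) => ?_
  change f ((Pi.single i 1 : Fin q.dim → F) k) = (Pi.single i 1 : Fin q.dim → K) k
  rw [Pi.single_apply, Pi.single_apply]; split_ifs <;> simp

theorem excellence (f : F →+* K) (hK : ∀ x : K, ∃ y : F, f y = x ^ 2) (φ : QF F) (hφ : ND (toQ φ))
    (z : Fin (φ.map f).dim → K) (hz0 : z ≠ 0) (hz : toQ (φ.map f) z = 0) :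
    ∃ φ' : QF F, ND (toQ φ') ∧ φ'.dim + 2 = φ.dim ∧
      Neu ((toQ (φ.map f)).prod (toQ (φ'.map f))) ∧
      ∀ U : Submodule K (Fin (φ.map f).dim → K), (∀ x ∈ U, toQ (φ.map f) x = 0) → z ∈ U →
        ∃ U' : Submodule K (Fin (φ'.map f).dim → K), (∀ x ∈ U', toQ (φ'.map f) x = 0) ∧
          finrank K U ≤ finrank K U' + 1 := by
  set QK := toQ (φ.map f) with hQK
  have hND : ND QK := hφ.map f
  -- a vector over F not orthogonal to z
  obtain ⟨e, he⟩ : ∃ e : Fin φ.dim → F, polar QK (bv φ f e) z ≠ 0 := by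
    by_contra hcon
    push Not at hcon
    apply hz0
    apply hND
    have : polarBilin QK z = 0 := by
      apply (Pi.basisFun K (Fin (φ.map f).dim)).ext
      intro i
      have h1 := hcon (Pi.single i 1)
      have h2 : bv φ f (Pi.single (M := fun _ => F) i 1) = Pi.single (M := fun _ : Fin (φ.map f).dim => K) i 1 := bv_single φ f i
      rw [h2, polar_comm] at h1
      simpa using h1
    intro y
    exact LinearMap.congr_fun this y
  -- rescale z
  set c := polar QK (bv φ f e) z with hc
  set z' := c⁻¹ • z with hz'
  have hez : polar QK (bv φ f e) z' = 1 := by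
    rw [hz', polar_smul_right, ← hc]; simp [he]
  have hz'0 : z' ≠ 0 := by
    simp [hz', he, hz0]
  have hz'Q : QK z' = 0 := by rw [hz', QuadraticMap.map_smul, hz]; simp
  have he0 : e ≠ 0 := by
    rintro rfl
    apply he
    have : bv φ f 0 = 0 := by funext i; exact map_zero f
    rw [hc, this]; simp
  obtain ⟨g, hg⟩ : ∃ g, polar (toQ φ) e g = 1 := by
    by_contra hcon
    push Not at hcon
    apply he0
    apply hφ
    intro y
    by_contra hy
    apply hcon ((polar (toQ φ) e y)⁻¹ • y)
    rw [polar_smul_right]; simp [hy]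
  let T := pairOrth (toQ φ) e g
  have hT : finrank F T + 2 = φ.dim := by
    have := finrank_pairOrth (toQ φ) e g hg
    rwa [finrank_fin_fun] at this
  let m := finrank F T
  let t : Fin m → (Fin φ.dim → F) := fun i => (finBasis F T i : Fin φ.dim → F)
  have ht : ∀ i, polar (toQ φ) e (t i) = 0 ∧ polar (toQ φ) g (t i) = 0 := fun i =>
    (mem_pairOrth _ _ _ _).1 (finBasis F T i).2
  let p : Fin m → K := fun i => polar QK (bv φ f (t i)) z'
  let u : Fin m → (Fin (φ.map f).dim → K) := fun i => bv φ f (t i) + p i • bv φ f e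
  choose s hs using hK
  have hα : ∀ i, f (toQ φ (t i) + s (p i) * toQ φ e) = QK (u i) := fun i => by
    have h1 : polar QK (bv φ f (t i)) (bv φ f e) = 0 := by
      rw [hQK, polar_bv, polar_comm, (ht i).1, map_zero]
    simp only [u]
    rw [QuadraticMap.map_add QK, QuadraticMap.map_smul, polar_smul_right, h1, toQ_bv, toQ_bv, map_add, map_mul, hs]
    simp only [smul_eq_mul]; ring
  have hβ : ∀ i j, f (polar (toQ φ) (t i) (t j)) = polar QK (u i) (u j) := fun i j => by
    simp only [u]
    rw [polar_add_left, polar_add_right, polar_add_right, polar_smul_left, polar_smul_left, polar_smul_right,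
      polar_smul_right, polar_self2, hQK, polar_bv, polar_bv, polar_bv, (ht j).1, polar_comm _ (t i) e, (ht i).1]
    simp
  obtain ⟨cm, hcm⟩ := exists_QF f QK u _ _ hα hβ
  let φ' : QF F := ⟨m, cm⟩
  let j : (Fin m → K) →ₗ[K] (Fin (φ.map f).dim → K) := Fintype.linearCombination K u
  have hj : ∀ x, toQ (φ'.map f) x = QK (j x) := hcm
  have hjp : ∀ x y, polar (toQ (φ'.map f)) x y = polar QK (j x) (j y) := fun x y => by
    have h : QK (j (x + y)) = QK (j x + j y) := congrArg QK (map_add j x y)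
    have h1 := hj (x + y)
    have h2 := hj x
    have h3 := hj y
    unfold polar
    exact congrArg₂ _ (congrArg₂ _ (h1.trans h) h2) h3
  have hφ' : ND (toQ φ') := by
    intro x hx
    let w : Fin φ.dim → F := Fintype.linearCombination F t x
    have hw : w = ((finBasis F T).equivFun.symm x : T) := by
      simp [w, Fintype.linearCombination_apply, Basis.equivFun_symm_apply, t]
      rfl
    have hwT : w ∈ T := by rw [hw]; exact Subtype.mem _
    have hwt : ∀ i, polar (toQ φ) w (t i) = 0 := by
      intro i
      apply f.injective
      rw [map_zero]
      have h1 := hx (Pi.single (M := fun _ => F) i 1)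
      have h2 := congrArg f h1
      rw [← polar_bv, hjp, map_zero] at h2
      have e1 : j (bv φ' f (Pi.single (M := fun _ => F) i 1)) = u i := by
        have : bv φ' f (Pi.single (M := fun _ => F) i 1) = (Pi.single i 1 : Fin m → K) := bv_single φ' f i
        rw [this]
        simp [j, Fintype.linearCombination_apply, Pi.single_apply]
      have e2 : j (bv φ' f x) = ∑ k, f (x k) • u k := by
        simp [j, Fintype.linearCombination_apply]; rfl
      rw [e1, e2] at h2
      have e3 := LinearMap.congr_fun (map_sum (polarBilin QK) (fun k => f (x k) • u k) Finset.univ) (u i)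
      rw [polarBilin_apply_apply, h2, LinearMap.sum_apply] at e3
      have e4 : w = ∑ k : Fin m, x k • t k := by simp only [w, Fintype.linearCombination_apply]
      rw [e4]
      have e5 := LinearMap.congr_fun (map_sum (polarBilin (toQ φ)) (fun k => x k • t k) Finset.univ) (t i)
      rw [polarBilin_apply_apply, LinearMap.sum_apply] at e5
      rw [e5, map_sum, e3]
      refine Finset.sum_congr rfl fun k _ => ?_
      rw [polarBilin_apply_apply, polarBilin_apply_apply, polar_smul_left, polar_smul_left, ← hβ, smul_eq_mul, smul_eq_mul, map_mul]
    have hwT' : ∀ y ∈ T, polar (toQ φ) w y = 0 := by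
      intro y hy
      have : (polarBilin (toQ φ) w).comp T.subtype = 0 := by
        apply (finBasis F T).ext
        intro i; simpa using hwt i
      exact LinearMap.congr_fun this ⟨y, hy⟩
    have hw0 : w = 0 := by
      apply hφ
      intro v
      have h1 := hwT' _ (decomp_pair (toQ φ) e g hg v)
      obtain ⟨h2, h3⟩ := (mem_pairOrth _ _ _ _).1 hwT
      rw [polar_comm] at h2 h3
      simpa [polar_sub_right, polar_smul_right, h2, h3] using h1
    have : (finBasis F T).equivFun.symm x = 0 := by
      apply Subtype.ext; rw [← hw, hw0]; rfl
    exact (LinearEquiv.map_eq_zero_iff _).1 this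
  have hjz : ∀ x, polar QK (j x) z' = 0 := fun x => by
    have e3 := LinearMap.congr_fun (map_sum (polarBilin QK) (fun k => x k • u k) Finset.univ) z'
    have e4 : j x = ∑ k, x k • u k := by simp [j, Fintype.linearCombination_apply]
    rw [e4]
    refine e3.trans ?_
    rw [LinearMap.sum_apply]
    apply Finset.sum_eq_zero
    intro k _
    simp only [polarBilin_apply_apply, u, polar_smul_left, polar_add_left, hez]
    simp [p, CharTwo.add_self_eq_zero]
  have hje : ∀ x, polar QK (j x) (bv φ f e) = 0 := fun x => by
    have e3 := LinearMap.congr_fun (map_sum (polarBilin QK) (fun k => x k • u k) Finset.univ) (bv φ f e)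
    have e4 : j x = ∑ k, x k • u k := by simp [j, Fintype.linearCombination_apply]
    rw [e4]
    refine e3.trans ?_
    rw [LinearMap.sum_apply]
    apply Finset.sum_eq_zero
    intro k _
    simp only [polarBilin_apply_apply, u, polar_smul_left, polar_add_left, polar_self2]
    rw [hQK, polar_bv, polar_comm, (ht k).1]; simp
  have hdimK : finrank K (Fin (φ.map f).dim → K) = m + 2 := by
    rw [finrank_fin_fun]; exact hT.symm
  refine ⟨φ', hφ', hT, ?_, ?_⟩
  · let G : ((Fin m → K) × K) →ₗ[K] (Fin (φ.map f).dim → K) × (Fin m → K) :=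
      LinearMap.prod (LinearMap.coprod j (LinearMap.toSpanSingleton K _ z')) (LinearMap.fst K _ _)
    have hG : ∀ x c, G (x, c) = (j x + c • z', x) := fun x c => by simp [G]
    refine ⟨LinearMap.range G, ?_, ?_⟩
    · rintro _ ⟨⟨x, c⟩, rfl⟩
      refine (congrArg _ (hG x c)).trans ?_
      have h1 : toQ (φ'.map f) x = QK (j x) := hj x
      have h2 : QK (j x + c • z') = QK (j x) := by
        rw [QuadraticMap.map_add QK, QuadraticMap.map_smul, hz'Q, polar_smul_right, hjz]; simp
      refine (prod_apply QK (toQ (φ'.map f)) (j x + c • z', x)).trans ?_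
      rw [h2, h1, CharTwo.add_self_eq_zero]
    · have : finrank K (LinearMap.range G) = m + 1 := by
        rw [LinearMap.finrank_range_of_inj]
        · rw [finrank_prod, finrank_fin_fun, finrank_self]
        · rintro ⟨x, c⟩ ⟨x', c'⟩ h
          rw [hG, hG] at h
          have h1 : x = x' := congrArg Prod.snd h
          subst h1
          have h2 : j x + c • z' = j x + c' • z' := congrArg Prod.fst h
          have h3 := smul_left_injective K hz'0 (add_left_cancel h2)
          rw [h3]
      have e5 : finrank K ((Fin (φ.map f).dim → K) × (Fin (φ'.map f).dim → K)) = m + 2 + m := by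
        rw [finrank_prod, hdimK, finrank_fin_fun]; rfl
      refine e5.le.trans ?_
      refine le_trans ?_ (Nat.mul_le_mul_left 2 this.ge)
      omega
  · intro U hU hzU
    have hjinj : Function.Injective j := by
      rw [← LinearMap.ker_eq_bot, eq_bot_iff]
      intro x hx
      have hx : j x = 0 := hx
      have : x = (0 : Fin (φ'.map f).dim → K) := (hφ'.map f) x (fun y => by
        refine (hjp x y).trans ?_
        rw [hx]; simp)
      exact this
    have hH : LinearMap.range j = pairOrth QK (bv φ f e) z' := by
      apply Submodule.eq_of_le_of_finrank_eq
      · rintro _ ⟨x, rfl⟩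
        rw [mem_pairOrth, polar_comm, hje, polar_comm, hjz]; simp
      · have h1 := finrank_pairOrth QK _ _ hez
        rw [LinearMap.finrank_range_of_inj hjinj, finrank_fin_fun]
        omega
    have hz'U : z' ∈ U := U.smul_mem _ hzU
    have h1 := finrank_map_add (polarBilin QK (bv φ f e)) U
    have h2 : finrank K (U.map (polarBilin QK (bv φ f e))) ≤ 1 := by
      have := Submodule.finrank_le (U.map (polarBilin QK (bv φ f e)))
      rwa [finrank_self] at this
    have h3 : U ⊓ LinearMap.ker (polarBilin QK (bv φ f e)) ≤ (U.comap j).map j := by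
      rintro y ⟨hyU, hy⟩
      have : y ∈ LinearMap.range j := by
        rw [hH, mem_pairOrth]
        exact ⟨by simpa using hy, polar_zero_of_iso hU hz'U hyU⟩
      obtain ⟨x, rfl⟩ := this
      exact ⟨x, hyU, rfl⟩
    have h4 := Submodule.finrank_mono h3
    have h5 := finrank_map_add j (U.comap j)
    refine ⟨U.comap j, ?_, ?_⟩
    · intro x hx
      exact (hj x).trans (hU _ hx)
    · change finrank K U ≤ finrank K (U.comap j) + 1
      omega

theorem excellence_sub (f : F →+* K) (hK : ∀ x : K, ∃ y : F, f y = x ^ 2) (r : ℕ) : ∀ (φ : QF F) (hφ : ND (toQ φ))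
    (U : Submodule K (Fin (φ.map f).dim → K)) (hU : ∀ x ∈ U, toQ (φ.map f) x = 0) (hr : r ≤ finrank K U),
    ∃ φ' : QF F, ND (toQ φ') ∧ φ'.dim + 2 * r = φ.dim ∧ 
      Neu ((toQ (φ.map f)).prod (toQ (φ'.map f))) := by
  induction r with
  | zero =>
    intro φ hφ U hU hr
    exact ⟨φ, hφ, rfl, Neu.self _⟩
  | succ r ih =>
    intro φ hφ U hU hr
    have : U ≠ ⊥ := by rintro rfl; rw [finrank_bot] at hr; omega
    obtain ⟨z, hzU, hz0⟩ := U.exists_mem_ne_zero_of_ne_bot this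
    obtain ⟨φ₁, h1, h2, h3, h4⟩ := excellence f hK φ hφ z hz0 (hU z hzU)
    obtain ⟨U', h5, h6⟩ := h4 U hU hzU
    obtain ⟨φ₂, h7, h8, h9⟩ := ih φ₁ h1 U' h5 (by omega)
    exact ⟨φ₂, h7, by omega, Neu.trans (h1.map f) h3 h9⟩

/-- reduction to a form anisotropic over K -/
theorem exists_aniso (f : F →+* K) (hK : ∀ x : K, ∃ y : F, f y = x ^ 2) (φ : QF F) (hφ : ND (toQ φ)) :
    ∃ φ' : QF F, ND (toQ φ') ∧ (∀ x, toQ (φ'.map f) x = 0 → x = 0) ∧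
      Neu ((toQ (φ.map f)).prod (toQ (φ'.map f))) := by
  induction h : φ.dim using Nat.strong_induction_on generalizing φ with
  | _ d ih =>
    by_cases ha : ∀ x, toQ (φ.map f) x = 0 → x = 0
    · exact ⟨φ, hφ, ha, Neu.self _⟩
    · push Not at ha
      obtain ⟨z, hz, hz0⟩ := ha
      obtain ⟨φ₁, h1, h2, h3, h4⟩ := excellence f hK φ hφ z hz0 hz
      obtain ⟨φ₂, k1, k2, k3⟩ := ih φ₁.dim (by omega) φ₁ h1 rfl
      exact ⟨φ₂, k1, k2, Neu.trans (h1.map f) h3 k3⟩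

end E2
end WK

namespace WK
open QuadraticMap Module QF

section F1
variable {E : Type*} [Field E]

lemma iso_def {q q' : QF E} : Isometric q q' ↔
    ∃ e : (Fin q.dim → E) ≃ₗ[E] (Fin q'.dim → E), ∀ x, toQ q' (e x) = toQ q x := by
  simp only [toQ_apply]; rfl

lemma iso_symm {q q' : QF E} (h : Isometric q q') : Isometric q' q := by
  rw [iso_def] at *
  obtain ⟨e, he⟩ := h
  exact ⟨e.symm, fun x => by rw [← he, e.apply_symm_apply]⟩

lemma iso_trans {q q' q'' : QF E} (h : Isometric q q') (h' : Isometric q' q'') : Isometric q q'' := by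
  rw [iso_def] at *
  obtain ⟨e, he⟩ := h
  obtain ⟨e', he'⟩ := h'
  exact ⟨e.trans e', fun x => by rw [LinearEquiv.trans_apply, he', he]⟩

lemma iso_congr (p : QF E) {q q' : QF E} (h : Isometric q q') : Isometric (p.orthSum q) (p.orthSum q') := by
  rw [iso_def] at *
  obtain ⟨e, he⟩ := h
  refine ⟨(osE p q).trans (((LinearEquiv.refl E _).prodCongr e).trans (osE p q').symm), fun x => ?_⟩
  rw [osE_eval p q x]
  simp only [LinearEquiv.trans_apply]
  rw [osE_eval, LinearEquiv.apply_symm_apply]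
  simp [he]

lemma iso_assoc (p q r : QF E) : Isometric (p.orthSum (q.orthSum r)) ((p.orthSum q).orthSum r) := by
  rw [iso_def]
  refine ⟨(osE p (q.orthSum r)).trans (((LinearEquiv.refl E _).prodCongr (osE q r)).trans
    ((LinearEquiv.prodAssoc E _ _ _).symm.trans (((osE p q).symm.prodCongr (LinearEquiv.refl E _)).trans (osE (p.orthSum q) r).symm))), fun x => ?_⟩
  simp only [LinearEquiv.trans_apply]
  rw [osE_eval, LinearEquiv.apply_symm_apply, osE_eval]
  simp only [prod_apply, LinearEquiv.prodCongr_apply, LinearEquiv.refl_apply]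
  rw [osE_eval, LinearEquiv.apply_symm_apply, osE_eval]
  simp [add_assoc]
  rfl

lemma iso_zero (p q : QF E) (h : q.dim = 0) : Isometric (p.orthSum q) p := by
  rw [iso_def]
  haveI : IsEmpty (Fin q.dim) := by rw [h]; infer_instance
  refine ⟨(osE p q).trans LinearEquiv.prodUnique, fun x => ?_⟩
  rw [osE_eval]
  simp only [LinearEquiv.trans_apply, prod_apply]
  have : (osE p q x).2 = 0 := Subsingleton.elim _ _
  rw [this, QuadraticMap.map_zero, add_zero]; rfl

lemma zeros_eval (l : ℕ) (x) : toQ (zeros l : QF E) x = 0 := by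
  have : toQ (zeros l : QF E) x = ∑ i, (zeros l : QF E).c i i * x i ^ 2 :=
    toQ_diag (fun i j h => Matrix.diagonal_apply_ne _ h) x
  rw [this]
  apply Finset.sum_eq_zero
  intro i _
  have : (zeros l : QF E).c i i = 0 := Matrix.diagonal_apply_eq _ i
  rw [this, zero_mul]

variable [CharP E 2]

lemma Neu_of_zero_iso {A1 A2 Z1 Z2 : Type*} [AddCommGroup A1] [Module E A1] [FiniteDimensional E A1]
    [AddCommGroup A2] [Module E A2] [FiniteDimensional E A2]
    [AddCommGroup Z1] [Module E Z1] [FiniteDimensional E Z1]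
    [AddCommGroup Z2] [Module E Z2] [FiniteDimensional E Z2]
    (Q1 : QuadraticForm E A1) (Q2 : QuadraticForm E A2) (e : (A1 × Z1) ≃ₗ[E] (A2 × Z2))
    (he : ∀ x, Q2 (e x).1 = Q1 x.1) : Neu (Q1.prod Q2) := by
  let g : (A1 × Z1) →ₗ[E] A1 × A2 := (LinearMap.fst E A1 Z1).prod ((LinearMap.fst E A2 Z2).comp e.toLinearMap)
  have hg : ∀ x, g x = (x.1, (e x).1) := fun x => rfl
  have h1 := LinearMap.finrank_range_add_finrank_ker g
  have h2 : finrank E (LinearMap.ker g) ≤ finrank E Z1 := by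
    apply LinearMap.finrank_le_finrank_of_injective (f := (LinearMap.snd E A1 Z1).comp (LinearMap.ker g).subtype)
    rw [← LinearMap.ker_eq_bot, eq_bot_iff]
    rintro ⟨x, hx⟩ hx2
    have hx1 : g x = 0 := hx
    rw [hg] at hx1
    have hx2 : x.2 = 0 := hx2
    apply Subtype.ext
    exact Prod.ext (show x.1 = 0 from congrArg Prod.fst hx1) hx2
  have h3 : finrank E (LinearMap.ker g) ≤ finrank E Z2 := by
    apply LinearMap.finrank_le_finrank_of_injective (f := (LinearMap.snd E A2 Z2).comp (e.toLinearMap.comp (LinearMap.ker g).subtype))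
    rw [← LinearMap.ker_eq_bot, eq_bot_iff]
    rintro ⟨x, hx⟩ hx2
    have hx1 : g x = 0 := hx
    rw [hg] at hx1
    have hx2 : (e x).2 = 0 := hx2
    apply Subtype.ext
    apply e.injective
    rw [Submodule.coe_zero, map_zero]
    exact Prod.ext (congrArg Prod.snd hx1) hx2
  have h4 := e.finrank_eq
  rw [finrank_prod, finrank_prod] at h4
  rw [finrank_prod] at h1
  refine ⟨LinearMap.range g, ?_, ?_⟩
  · rintro _ ⟨x, rfl⟩
    rw [hg, prod_apply]
    simp only [he, CharTwo.add_self_eq_zero]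
  · rw [finrank_prod]; omega

theorem Neu_of_WittEquiv {φ χ : QF E} (h : WittEquiv φ χ) :
    Neu ((toQ φ).prod (toQ χ)) := by
  obtain ⟨k, k', l, l', h⟩ := h
  rw [iso_def] at h
  obtain ⟨e, he⟩ := h
  let E1 : ∀ (φ : QF E) k l, (Fin (φ.orthSum ((hyp k).orthSum (zeros l))).dim → E) ≃ₗ[E]
      ((Fin φ.dim → E) × (Fin (hyp k : QF E).dim → E)) × (Fin (zeros l : QF E).dim → E) := fun φ k l =>
    ((osE φ _).trans ((LinearEquiv.refl E _).prodCongr (osE (hyp k) (zeros l)))).trans (LinearEquiv.prodAssoc E _ _ _).symm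
  have hE1 : ∀ (φ : QF E) k l x, toQ (φ.orthSum ((hyp k).orthSum (zeros l))) x =
      ((toQ φ).prod (toQ (hyp k))) (E1 φ k l x).1 := fun φ k l x => by
    rw [osE_eval, prod_apply, osE_eval, prod_apply, zeros_eval]
    simp [E1]
    rfl
  have := Neu_of_zero_iso ((toQ φ).prod (toQ (hyp k))) ((toQ χ).prod (toQ (hyp k')))
    ((E1 φ k l).symm.trans (e.trans (E1 χ k' l'))) (fun x => by
      simp only [LinearEquiv.trans_apply]
      rw [← hE1, he, hE1, LinearEquiv.apply_symm_apply])
  refine Neu.cancel ((hyp_ND k).prod (hyp_ND k')) ?_ ((hyp_Neu k).prod (hyp_Neu k'))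
  refine Neu.of_equiv (LinearEquiv.prodProdProdComm E _ _ _ _) ?_ this
  rintro ⟨⟨x, y⟩, ⟨z, w⟩⟩
  simp; ring

theorem WittEquiv_add_twice (φ B : QF E) (hB : ND (toQ B)) : WittEquiv φ ((φ.orthSum B).orthSum B) := by
  have h1 : ND (toQ (B.orthSum B)) := ND_orthSum.2 (hB.prod hB)
  have h2 : Neu (toQ (B.orthSum B)) := Neu_orthSum.2 (Neu.self _)
  obtain ⟨k, hk⟩ := (hyperbolic_iff h1).2 h2
  refine ⟨k, 0, 0, 0, ?_⟩
  refine iso_trans (iso_congr φ (iso_zero _ _ rfl)) ?_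
  refine iso_trans (iso_congr φ (iso_symm hk)) ?_
  refine iso_trans (iso_assoc _ _ _) ?_
  exact iso_symm (iso_zero _ _ rfl)

end F1
end WK

namespace WK
open QuadraticMap Module QF

section G1
variable {R S : Type*} [CommRing R] [CommRing S] {d : ℕ}

/-- quadratic form over a commutative ring with given coefficient matrix -/
noncomputable def Qm (c : Matrix (Fin d) (Fin d) R) : QuadraticForm R (Fin d → R) :=
  LinearMap.BilinMap.toQuadraticMap (Matrix.toBilin' c)

lemma Qm_apply (c : Matrix (Fin d) (Fin d) R) (x : Fin d → R) : Qm c x = ∑ i, ∑ j, c i j * x i * x j := by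
  simp only [Qm, LinearMap.BilinMap.toQuadraticMap_apply, Matrix.toBilin'_apply]
  exact Finset.sum_congr rfl fun i _ => Finset.sum_congr rfl fun j _ => by ring

lemma Qm_map (f : R →+* S) (c : Matrix (Fin d) (Fin d) R) (x : Fin d → R) :
    Qm (c.map f) (fun i => f (x i)) = f (Qm c x) := by
  simp [Qm_apply]

lemma polar_Qm_map (f : R →+* S) (c : Matrix (Fin d) (Fin d) R) (x y : Fin d → R) :
    polar (Qm (c.map f)) (fun i => f (x i)) (fun i => f (y i)) = f (polar (Qm c) x y) := by
  unfold polar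
  rw [map_sub, map_sub, ← Qm_map, ← Qm_map, ← Qm_map]
  congr 3
  ext i; simp

/-- the linear functional `polar v` -/
def lv (c : Matrix (Fin d) (Fin d) R) (v : Fin d → R) : Fin d → R := fun i => ∑ j, (c i j + c j i) * v j

lemma polar_lv (c : Matrix (Fin d) (Fin d) R) (v x : Fin d → R) :
    polar (Qm c) v x = ∑ i, lv c v i * x i := by
  simp only [Qm, LinearMap.BilinMap.polar_toQuadraticMap, Matrix.toBilin'_apply, lv, Finset.sum_mul, add_mul,
    Finset.sum_add_distrib]
  rw [add_comm]
  congr 1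
  · exact Finset.sum_congr rfl fun i _ => Finset.sum_congr rfl fun j _ => by ring
  · rw [Finset.sum_comm]
    exact Finset.sum_congr rfl fun i _ => Finset.sum_congr rfl fun j _ => by ring

lemma lv_map (f : R →+* S) (c : Matrix (Fin d) (Fin d) R) (v : Fin d → R) (i) :
    lv (c.map f) (fun i => f (v i)) i = f (lv c v i) := by
  simp [lv]

def An (c : Matrix (Fin d) (Fin d) R) : Prop := ∀ x, Qm c x = 0 → x = 0
end G1

section G2
variable {k : Type*} [Field k] {d : ℕ}
open Polynomial

lemma Qm_natDegree (c : Matrix (Fin d) (Fin d) k) (p : Fin d → k[X]) (m : ℕ) (hp : ∀ i, (p i).natDegree ≤ m) :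
    (Qm (c.map C) p).coeff (2 * m) = Qm c (fun i => (p i).coeff m) ∧ (Qm (c.map C) p).natDegree ≤ 2 * m := by
  simp only [Qm_apply]
  constructor
  · simp only [finset_sum_coeff]
    refine Finset.sum_congr rfl fun i _ => Finset.sum_congr rfl fun j _ => ?_
    rw [Matrix.map_apply, mul_assoc, coeff_C_mul, two_mul, coeff_mul_add_eq_of_natDegree_le (hp i) (hp j), mul_assoc]
  · refine natDegree_sum_le_of_forall_le _ _ fun i _ => natDegree_sum_le_of_forall_le _ _ fun j _ => ?_
    rw [Matrix.map_apply, mul_assoc]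
    refine (natDegree_C_mul_le _ _).trans (natDegree_mul_le.trans ?_)
    have := hp i; have := hp j; omega

lemma exists_max_deg (p : Fin d → k[X]) (hp : p ≠ 0) : ∃ m, (∀ i, (p i).natDegree ≤ m) ∧ ∃ i, (p i).coeff m ≠ 0 := by
  obtain ⟨i0, hi0⟩ := Function.ne_iff.1 hp
  classical
  let s : Finset (Fin d) := Finset.univ.filter (fun i => p i ≠ 0)
  obtain ⟨i, hi, hm⟩ := Finset.exists_max_image s (fun i => (p i).natDegree) ⟨i0, by simpa [s] using hi0⟩
  refine ⟨(p i).natDegree, fun j => ?_, i, ?_⟩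
  · by_cases hj : p j = 0
    · simp [hj]
    · exact hm j (by simp [s, hj])
  · have : p i ≠ 0 := by simpa [s] using hi
    simpa using this

lemma An_poly {c : Matrix (Fin d) (Fin d) k} (hc : An c) : An (c.map (C : k →+* k[X])) := by
  intro p hp
  by_contra h
  obtain ⟨m, h1, i, h2⟩ := exists_max_deg p h
  have h3 := (Qm_natDegree c p m h1).1
  rw [hp, coeff_zero] at h3
  exact h2 (congrFun (hc _ h3.symm) i)

lemma deg_bound {c : Matrix (Fin d) (Fin d) k} (hc : An c) (p : Fin d → k[X]) (m : ℕ)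
    (h : (Qm (c.map C) p).natDegree ≤ 2 * m) (i) : (p i).natDegree ≤ m := by
  by_cases hp : p = 0
  · simp [hp]
  obtain ⟨M, h1, j, h2⟩ := exists_max_deg p hp
  refine (h1 i).trans ?_
  by_contra hlt
  have h3 := (Qm_natDegree c p M h1).1
  rw [coeff_eq_zero_of_natDegree_lt (by omega)] at h3
  exact h2 (congrFun (hc _ h3.symm) j)

theorem CP {c : Matrix (Fin d) (Fin d) k} (hc : An c) (L : Set (Fin d → k)) (g : k[X]) (D : k[X]) (hD : D ≠ 0)
    (p : Fin d → k[X]) (hp : Qm (c.map C) p = g * D ^ 2) (hL : ∀ l ∈ L, ∑ i, C (l i) * p i = 0) :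
    ∃ w : Fin d → k[X], Qm (c.map C) w = g ∧ ∀ l ∈ L, ∑ i, C (l i) * w i = 0 := by
  induction hn : D.natDegree using Nat.strong_induction_on generalizing D p with
  | _ n ih =>
  set Q := Qm (c.map (C : k →+* k[X])) with hQ
  let q : Fin d → k[X] := fun i => p i / D
  let r : Fin d → k[X] := fun i => p i % D
  have hpqr : p = D • q + r := by
    ext1 i; simp [q, r, EuclideanDomain.div_add_mod]
  have hr : ∀ i, (r i).degree < D.degree := fun i => EuclideanDomain.mod_lt _ hD
  have hLq : ∀ l ∈ L, ∑ i, C (l i) * q i = 0 ∧ ∑ i, C (l i) * r i = 0 := by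
    intro l hl
    have h1 := hL l hl
    have h2 : D * (∑ i, C (l i) * q i) + ∑ i, C (l i) * r i = 0 := by
      rw [← h1, Finset.mul_sum, ← Finset.sum_add_distrib]
      refine Finset.sum_congr rfl fun i _ => ?_
      conv_rhs => rw [hpqr]
      simp only [Pi.add_apply, Pi.smul_apply, smul_eq_mul]; ring
    have h3 : (∑ i, C (l i) * r i).degree < D.degree := by
      refine (degree_sum_le _ _).trans_lt ?_
      rw [Finset.sup_lt_iff (bot_lt_iff_ne_bot.2 (by simpa using hD))]
      intro i _
      rw [← smul_eq_C_mul]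
      exact (degree_smul_le _ _).trans_lt (hr i)
    have h4 : ∑ i, C (l i) * q i = 0 := by
      by_contra h5
      have h6 : D * (∑ i, C (l i) * q i) = - ∑ i, C (l i) * r i := eq_neg_of_add_eq_zero_left h2
      have h7 := congrArg degree h6
      rw [degree_neg] at h7
      rw [← h7] at h3
      exact absurd h3 (not_lt.2 (degree_le_mul_left D h5))
    rw [h4, mul_zero, zero_add] at h2
    exact ⟨h4, h2⟩
  have hexp : Q p = D * D * Q q + D * polar Q q r + Q r := by
    rw [hpqr, QuadraticMap.map_add Q, QuadraticMap.map_smul, polar_smul_left, smul_eq_mul, smul_eq_mul]; ring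
  by_cases hr0 : r = 0
  · refine ⟨q, ?_, fun l hl => (hLq l hl).1⟩
    rw [hp, hr0] at hexp
    have hz : polar Q q 0 = 0 := by simp
    rw [hz, QuadraticMap.map_zero] at hexp
    have : D ^ 2 * (Q q) = D ^ 2 * g := by linear_combination -hexp
    exact mul_left_cancel₀ (pow_ne_zero 2 hD) this
  · set D' := g * D - D * Q q - polar Q q r with hD'
    have h1 : D * D' = Q r := by rw [hD']; linear_combination hp.symm.trans hexp
    have h2 : D' ≠ 0 := by
      intro h; rw [h, mul_zero] at h1
      exact hr0 (An_poly hc r h1.symm)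
    have h3 : D'.natDegree < n := by
      have hn0 : 0 < n := by
        by_contra h0
        apply hr0
        funext i
        have := hr i
        rw [degree_eq_natDegree hD, hn, show n = 0 by omega] at this
        simpa using Nat.WithBot.lt_zero_iff.1 this
      have h4 : (Q r).natDegree ≤ 2 * (n - 1) := (Qm_natDegree c r (n-1) (fun i => by
        have h5 := hr i
        by_cases h6 : r i = 0
        · simp [h6]
        · have := natDegree_lt_natDegree h6 h5
          omega)).2
      rw [← h1, natDegree_mul hD h2, hn] at h4
      omega
    refine ih _ h3 D' h2 ((Q q - g) • r + D' • q) ?_ ?_ rfl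
    · rw [QuadraticMap.map_add Q, QuadraticMap.map_smul, QuadraticMap.map_smul, polar_smul_left, polar_smul_right, ← h1, polar_comm]
      simp only [smul_eq_mul]
      have : polar Q q r = g * D - D * Q q - D' := by rw [hD']; ring
      rw [this]; ring
    · intro l hl
      obtain ⟨e1, e2⟩ := hLq l hl
      calc ∑ i, C (l i) * ((Q q - g) • r + D' • q) i = (Q q - g) * ∑ i, C (l i) * r i + D' * ∑ i, C (l i) * q i := by
            rw [Finset.mul_sum, Finset.mul_sum, ← Finset.sum_add_distrib]
            refine Finset.sum_congr rfl fun i _ => ?_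
            simp only [Pi.add_apply, Pi.smul_apply, smul_eq_mul]; ring
        _ = 0 := by rw [e1, e2]; ring

/-- the inclusion of constants -/
noncomputable def ι (k : Type*) [Field k] : k →+* FractionRing k[X] := (algebraMap k[X] (FractionRing k[X])).comp C

lemma clear_den (w : Fin d → FractionRing k[X]) : ∃ (D : k[X]) (p : Fin d → k[X]), D ≠ 0 ∧
    ∀ i, algebraMap k[X] (FractionRing k[X]) (p i) = algebraMap k[X] (FractionRing k[X]) D * w i := by
  obtain ⟨b, hb⟩ := IsLocalization.exist_integer_multiples_of_finite (nonZeroDivisors k[X]) w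
  choose p hp using hb
  refine ⟨b, p, nonZeroDivisors.ne_zero b.2, fun i => ?_⟩
  rw [hp, Algebra.smul_def]

lemma An_frac {c : Matrix (Fin d) (Fin d) k} (hc : An c) : An (c.map (ι k)) := by
  intro w hw
  obtain ⟨D, p, hD, hp⟩ := clear_den w
  have hinj := IsFractionRing.injective k[X] (FractionRing k[X])
  have h1 : Qm (c.map C) p = 0 := by
    apply hinj
    rw [← Qm_map, map_zero]
    have : (fun i => algebraMap k[X] (FractionRing k[X]) (p i)) = algebraMap k[X] (FractionRing k[X]) D • w := by
      funext i; simp [hp]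
    rw [this, QuadraticMap.map_smul]
    have : ((c.map C).map (algebraMap k[X] (FractionRing k[X]))) = c.map (ι k) := rfl
    rw [this, hw, smul_zero]
  have h2 := An_poly hc p h1
  funext i
  have h3 := hp i
  rw [h2] at h3
  simp only [Pi.zero_apply, map_zero] at h3
  have : algebraMap k[X] (FractionRing k[X]) D ≠ 0 := by
    intro h; exact hD (hinj (by rw [h, map_zero]))
  simpa [this] using h3.symm

theorem CP_step {c : Matrix (Fin d) (Fin d) k} (hc : An c) (L : Set (Fin d → k)) (w : Fin d → FractionRing k[X])
    (A0 A1 : k) (hw : Qm (c.map (ι k)) w = ι k A0 + ι k A1 * (algebraMap k[X] (FractionRing k[X]) X) ^ 2)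
    (hL : ∀ l ∈ L, ∑ i, ι k (l i) * w i = 0) :
    ∃ w0 w1 : Fin d → k, Qm c w0 = A0 ∧ Qm c w1 = A1 ∧ polar (Qm c) w0 w1 = 0 ∧
      (∀ l ∈ L, ∑ i, l i * w0 i = 0) ∧ (∀ l ∈ L, ∑ i, l i * w1 i = 0) := by
  obtain ⟨D, p, hD, hp⟩ := clear_den w
  have hinj := IsFractionRing.injective k[X] (FractionRing k[X])
  have h1 : Qm (c.map C) p = (C A0 + C A1 * X ^ 2) * D ^ 2 := by
    apply hinj
    rw [← Qm_map]
    have : (fun i => algebraMap k[X] (FractionRing k[X]) (p i)) = algebraMap k[X] (FractionRing k[X]) D • w := by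
      funext i; simp [hp]
    rw [this, QuadraticMap.map_smul]
    have : ((c.map C).map (algebraMap k[X] (FractionRing k[X]))) = c.map (ι k) := rfl
    rw [this, hw, smul_eq_mul, map_mul, map_add, map_mul, map_pow, map_pow]
    simp only [ι, RingHom.comp_apply]; ring
  have h2 : ∀ l ∈ L, ∑ i, C (l i) * p i = 0 := by
    intro l hl
    apply hinj
    rw [map_sum, map_zero]
    have := hL l hl
    calc _ = algebraMap k[X] (FractionRing k[X]) D * ∑ i, ι k (l i) * w i := by
          rw [Finset.mul_sum]
          refine Finset.sum_congr rfl fun i _ => ?_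
          rw [map_mul, hp]; simp only [ι, RingHom.comp_apply]; ring
      _ = 0 := by rw [this, mul_zero]
  obtain ⟨w', h3, h4⟩ := CP hc L _ D hD p h1 h2
  have h5 : ∀ i, (w' i).natDegree ≤ 1 := by
    apply deg_bound hc
    rw [h3]; compute_degree
  let w0 : Fin d → k := fun i => (w' i).coeff 0
  let w1 : Fin d → k := fun i => (w' i).coeff 1
  have h6 : w' = (X : k[X]) • (fun i => C (w1 i)) + (fun i => C (w0 i)) := by
    funext i
    simp only [Pi.add_apply, Pi.smul_apply, smul_eq_mul, w0, w1]
    rw [mul_comm]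
    exact eq_X_add_C_of_natDegree_le_one (h5 i)
  rw [h6, QuadraticMap.map_add (Qm _), QuadraticMap.map_smul, polar_smul_left, Qm_map, Qm_map, polar_Qm_map] at h3
  simp only [smul_eq_mul] at h3
  have c0 := congrArg (fun p : k[X] => coeff p 0) h3
  have c1 := congrArg (fun p : k[X] => coeff p 1) h3
  have c2 := congrArg (fun p : k[X] => coeff p 2) h3
  simp [coeff_X, coeff_C, ← pow_two, coeff_X_pow] at c0 c1 c2
  refine ⟨w0, w1, c0, c2, by rw [polar_comm]; exact c1, fun l hl => ?_, fun l hl => ?_⟩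
  · have := congrArg (fun p : k[X] => coeff p 0) (h4 l hl)
    simpa [finset_sum_coeff] using this
  · have := congrArg (fun p : k[X] => coeff p 1) (h4 l hl)
    simpa [finset_sum_coeff] using this

end G2
end WK

namespace WK
open QuadraticMap Module QF

section H1
universe u

/-- moving `w0` into the orthogonal complement of `v` -/
lemma move_orth {M : Type*} [Field M] {d : ℕ} {c : Matrix (Fin d) (Fin d) M} (hc : An c) (L : Set (Fin d → M))
    (w0 w1 v : Fin d → M) (h1 : Qm c w1 = Qm c v) (hb : polar (Qm c) w0 w1 = 0)
    (l0 : ∀ l ∈ L, ∑ i, l i * w0 i = 0) (l1 : ∀ l ∈ L, ∑ i, l i * w1 i = 0) (lv : ∀ l ∈ L, ∑ i, l i * v i = 0) :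
    ∃ w : Fin d → M, Qm c w = Qm c w0 ∧ polar (Qm c) v w = 0 ∧ ∀ l ∈ L, ∑ i, l i * w i = 0 := by
  by_cases hu : v - w1 = 0
  · rw [sub_eq_zero] at hu
    subst hu
    exact ⟨w0, rfl, by rw [polar_comm]; exact hb, l0⟩
  set u := v - w1 with hudef
  have hQu : Qm c u ≠ 0 := fun h => hu (hc _ h)
  set β := polar (Qm c) w0 v with hβ
  have hw0u : polar (Qm c) w0 u = β := by rw [hudef, polar_sub_right, hb, sub_zero]
  have hvv : polar (Qm c) v v = 2 * Qm c v := by rw [polar_self]; simp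
  have hvu : polar (Qm c) v u = Qm c u := by
    have h2 : Qm c w1 = Qm c (v - u) := by rw [hudef]; simp
    rw [h1, sub_eq_add_neg, QuadraticMap.map_add (Qm c), QuadraticMap.map_neg, polar_neg_right] at h2
    linear_combination h2
  refine ⟨w0 - (β / Qm c u) • u, ?_, ?_, ?_⟩
  · rw [sub_eq_add_neg, QuadraticMap.map_add (Qm c), QuadraticMap.map_neg, polar_neg_right, QuadraticMap.map_smul, polar_smul_right, hw0u]
    simp only [smul_eq_mul]
    field_simp
    ring
  · rw [polar_sub_right, polar_smul_right, hvu, polar_comm, ← hβ, smul_eq_mul]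
    field_simp; ring
  · intro l hl
    have : ∑ i, l i * u i = 0 := by
      have := lv l hl
      have := l1 l hl
      simp only [hudef, Pi.sub_apply, mul_sub, Finset.sum_sub_distrib, *, sub_self]
    calc ∑ i, l i * (w0 - (β / Qm c u) • u) i = ∑ i, l i * w0 i - (β / Qm c u) * ∑ i, l i * u i := by
          rw [Finset.mul_sum, ← Finset.sum_sub_distrib]
          refine Finset.sum_congr rfl fun i _ => ?_
          simp only [Pi.sub_apply, Pi.smul_apply, smul_eq_mul]; ring
      _ = 0 := by rw [this, l0 l hl]; ring

/-- the properties of the purely transcendental extension that we use -/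
structure TrExt {K M : Type*} [Field K] [Field M] (f : K →+* M) {N : ℕ} (t : Fin N → M) : Prop where
  inj : Function.Injective (MvPolynomial.eval₂Hom f t)
  an : ∀ (d : ℕ) (c : Matrix (Fin d) (Fin d) K), An c → An (c.map f)
  desc : ∀ (d : ℕ) (c : Matrix (Fin d) (Fin d) K), An c → ∀ (L : Set (Fin d → K)) (w : Fin d → M) (a : K),
    Qm (c.map f) w = f a → (∀ l ∈ L, ∑ i, f (l i) * w i = 0) →
      ∃ v : Fin d → K, Qm c v = a ∧ ∀ l ∈ L, ∑ i, l i * v i = 0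
  sub : ∀ (d : ℕ) (c : Matrix (Fin d) (Fin d) K), An c → ∀ (L : Set (Fin d → K)) (w : Fin d → M) (a : Fin N → K),
    Qm (c.map f) w = ∑ s, f (a s) * t s ^ 2 → (∀ l ∈ L, ∑ i, f (l i) * w i = 0) →
      ∃ v : Fin N → Fin d → K, (∀ s, Qm c (v s) = a s) ∧ (∀ s s', s ≠ s' → polar (Qm c) (v s) (v s') = 0) ∧
        ∀ s, ∀ l ∈ L, ∑ i, l i * v s i = 0

theorem exists_TrExt (K : Type u) [Field K] (N : ℕ) :
    ∃ (M : Type u) (_ : Field M) (f : K →+* M) (t : Fin N → M), TrExt f t := by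
  induction N with
  | zero =>
    refine ⟨K, inferInstance, RingHom.id K, Fin.elim0, ?_, ?_, ?_, ?_⟩
    · intro p q h
      obtain ⟨a, rfl⟩ := MvPolynomial.C_surjective (Fin 0) p
      obtain ⟨b, rfl⟩ := MvPolynomial.C_surjective (Fin 0) q
      simp at h
      rw [h]
    · intro d c hc
      exact hc
    · intro d c hc L w a h1 h2
      exact ⟨w, h1, h2⟩
    · intro d c hc L w a h1 h2
      exact ⟨Fin.elim0, fun s => s.elim0, fun s => s.elim0, fun s => s.elim0⟩
  | succ N ih =>
    obtain ⟨M', _, f', t', hinj, hA, hB, hS⟩ := ih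
    let f : K →+* FractionRing (Polynomial M') := (ι M').comp f'
    let x : FractionRing (Polynomial M') := algebraMap _ _ (Polynomial.X : Polynomial M')
    let t : Fin (N+1) → FractionRing (Polynomial M') := Fin.cons x (fun i => ι M' (t' i))
    have hmap : ∀ (d : ℕ) (c : Matrix (Fin d) (Fin d) K), c.map f = (c.map f').map (ι M') := fun d c => rfl
    have key : ∀ (d : ℕ) (c : Matrix (Fin d) (Fin d) K), An c → ∀ (L : Set (Fin d → K)) 
        (w : Fin d → FractionRing (Polynomial M')) (A0 A1 : M'),
        Qm (c.map f) w = ι M' A0 + ι M' A1 * x ^ 2 → (∀ l ∈ L, ∑ i, f (l i) * w i = 0) →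
        ∃ w0 w1 : Fin d → M', Qm (c.map f') w0 = A0 ∧ Qm (c.map f') w1 = A1 ∧ polar (Qm (c.map f')) w0 w1 = 0 ∧
      (∀ l ∈ L, ∑ i, f' (l i) * w0 i = 0) ∧ (∀ l ∈ L, ∑ i, f' (l i) * w1 i = 0) := by
      intro d c hc L w A0 A1 h1 h2
      obtain ⟨w0, w1, e1, e2, e3, e4, e5⟩ := CP_step (hA d c hc) (Set.image (fun l i => f' (l i)) L) w A0 A1 h1 (by
        rintro _ ⟨l, hl, rfl⟩
        exact h2 l hl)
      exact ⟨w0, w1, e1, e2, e3, fun l hl => e4 _ ⟨l, hl, rfl⟩, fun l hl => e5 _ ⟨l, hl, rfl⟩⟩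
    refine ⟨FractionRing (Polynomial M'), inferInstance, f, t, ?_, ?_, ?_, ?_⟩
    · have : MvPolynomial.eval₂Hom f t = ((algebraMap (Polynomial M') (FractionRing (Polynomial M'))).comp
          (Polynomial.mapRingHom (MvPolynomial.eval₂Hom f' t'))).comp (MvPolynomial.finSuccEquiv K N : _ →+* _) := by
        apply MvPolynomial.ringHom_ext
        · intro r
          simp [f, ι, MvPolynomial.finSuccEquiv_apply]
        · intro i
          refine Fin.cases ?_ (fun i => ?_) i
          · simp [t, x, MvPolynomial.finSuccEquiv_apply]
          · simp [t, ι, MvPolynomial.finSuccEquiv_apply]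
      rw [this]
      simp only [RingHom.coe_comp]
      refine ((IsFractionRing.injective _ _).comp ?_).comp ?_
      · exact Polynomial.map_injective _ hinj
      · exact (MvPolynomial.finSuccEquiv K N).injective
    · intro d c hc
      exact An_frac (hA d c hc)
    · intro d c hc L w a h1 h2
      obtain ⟨w0, w1, e1, e2, e3, e4, e5⟩ := key d c hc L w (f' a) 0 (by rw [h1]; simp [f]) h2
      exact hB d c hc L w0 a e1 e4
    · intro d c hc L w a h1 h2
      obtain ⟨w0, w1, e1, e2, e3, e4, e5⟩ := key d c hc L w (∑ s, f' (a s.succ) * t' s ^ 2) (f' (a 0)) (by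
        rw [h1, Fin.sum_univ_succ]
        simp [f, t, add_comm]) h2
      obtain ⟨v, hv1, hv2⟩ := hB d c hc L w1 (a 0) e2 e5
      obtain ⟨w', g1, g2, g3⟩ := move_orth (hA d c hc) (Set.image (fun l i => f' (l i)) L) w0 w1 (fun i => f' (v i))
        (by rw [e2, Qm_map, hv1]) e3 (by rintro _ ⟨l, hl, rfl⟩; exact e4 l hl) (by rintro _ ⟨l, hl, rfl⟩; exact e5 l hl)
        (by
          rintro _ ⟨l, hl, rfl⟩
          have := congrArg f' (hv2 l hl)
          simpa [map_sum, map_mul] using this)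
      obtain ⟨vs, k1, k2, k3⟩ := hS d c hc (insert (lv c v) L) w' (fun s => a s.succ) (by rw [g1, e1]) (by
        intro l hl
        rcases hl with rfl | hl
        · rw [polar_lv] at g2
          rw [← g2]
          refine Finset.sum_congr rfl fun i _ => ?_
          rw [lv_map]
        · exact g3 _ ⟨l, hl, rfl⟩)
      have hvo : ∀ s, polar (Qm c) v (vs s) = 0 := fun s => by
        rw [polar_lv]; exact k3 s _ (Set.mem_insert _ _)
      refine ⟨Fin.cons v vs, ?_, ?_, ?_⟩
      · intro s
        refine Fin.cases ?_ (fun i => ?_) s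
        · simpa using hv1
        · simpa using k1 i
      · intro s s'
        refine Fin.cases ?_ (fun i => ?_) s
        · refine Fin.cases (fun h => absurd rfl h) (fun i' _ => ?_) s'
          simpa using hvo i'
        · refine Fin.cases (fun _ => ?_) (fun i' h => ?_) s'
          · rw [polar_comm]; simpa using hvo i
          · simpa using k2 i i' (fun e => h (by rw [e]))
      · intro s l hl
        refine Fin.cases ?_ (fun i => ?_) s
        · simpa using hv2 l hl
        · simpa using k3 i l (Set.mem_insert_of_mem _ hl)

end H1
end WK

namespace WK
open QuadraticMap Module QF

section I1
variable {K M E : Type*} [Field K] [Field M] [Field E] [CharP K 2]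

/-- the generic point embedding -/
theorem generic_embed (q : QF K) [IsDomain (CoordRing q)] (hq : ∀ i j, i ≠ j → q.c i j = 0) (i0 : Fin q.dim) (h0 : q.c i0 i0 = 1)
    (f : K →+* M) (t : Fin q.dim → M) (hinj : Function.Injective (MvPolynomial.eval₂Hom f t))
    (j : M →+* E) (θ : E) (hθ : θ ^ 2 = j (∑ s, f (q.c s s) * t s ^ 2)) :
    ∃ g : FunctionField q →+* E, (∀ x : K, g (algebraMap (CoordRing q) (FunctionField q) (algebraMap K (CoordRing q) x)) = j (f x)) ∧
      ∀ s, g (algebraMap (CoordRing q) (FunctionField q) (Ideal.Quotient.mk _ (MvPolynomial.X s))) = j (t s) + if s = i0 then θ else 0 := by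
  haveI : CharP M 2 := charP_of_injective_ringHom f.injective 2
  haveI : CharP E 2 := charP_of_injective_ringHom j.injective 2
  let y : Fin q.dim → E := fun s => j (t s) + if s = i0 then θ else 0
  let G : MvPolynomial (Fin q.dim) K →+* E := MvPolynomial.eval₂Hom (j.comp f) y
  have hpoly : q.toPoly = ∑ s, MvPolynomial.C (q.c s s) * MvPolynomial.X s ^ 2 := by
    unfold toPoly
    refine Finset.sum_congr rfl fun i _ => ?_
    rw [Finset.sum_eq_single i]
    · ring
    · intro k _ hk
      rw [hq i k hk.symm]; simp
    · simp
  have hGq : G q.toPoly = 0 := by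
    rw [hpoly, map_sum]
    have : ∀ s, G (MvPolynomial.C (q.c s s) * MvPolynomial.X s ^ 2) = j (f (q.c s s) * t s ^ 2) + if s = i0 then θ ^ 2 else 0 := fun s => by
      simp only [G, y, map_mul, map_pow, MvPolynomial.eval₂Hom_C, MvPolynomial.eval₂Hom_X', RingHom.comp_apply]
      rw [CharTwo.add_sq]
      split_ifs with h
      · subst h; rw [h0]; simp
      · simp
    simp only [this]
    rw [Finset.sum_add_distrib, ← map_sum, Finset.sum_ite_eq' Finset.univ i0, if_pos (Finset.mem_univ _), hθ, CharTwo.add_self_eq_zero]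
  let h : MvPolynomial (Fin q.dim) K →+* MvPolynomial (Fin q.dim) K :=
    MvPolynomial.eval₂Hom (MvPolynomial.C.comp (frobenius K 2))
      (fun s => if s = i0 then ∑ s ∈ Finset.univ.erase i0, MvPolynomial.C (q.c s s) * MvPolynomial.X s ^ 2 else MvPolynomial.X s ^ 2)
  have hsq : (Ideal.Quotient.mk (Ideal.span {q.toPoly})).comp (frobenius (MvPolynomial (Fin q.dim) K) 2) =
      (Ideal.Quotient.mk (Ideal.span {q.toPoly})).comp h := by
    apply MvPolynomial.ringHom_ext
    · intro r
      simp [h, frobenius_def]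
    · intro s
      simp only [RingHom.comp_apply, h, MvPolynomial.eval₂Hom_X', frobenius_def]
      split_ifs with hs
      · subst hs
        rw [Ideal.Quotient.mk_eq_mk_iff_sub_mem, CharTwo.sub_eq_add]
        have : MvPolynomial.X s ^ 2 + ∑ s ∈ Finset.univ.erase s, MvPolynomial.C (q.c s s) * MvPolynomial.X s ^ 2 = q.toPoly := by
          rw [hpoly, ← Finset.add_sum_erase _ _ (Finset.mem_univ s), h0]; simp
        rw [this]
        exact Ideal.mem_span_singleton_self _
      · rfl
  have hsq' : ∀ p, p ^ 2 - h p ∈ Ideal.span {q.toPoly} := fun p => by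
    have := RingHom.congr_fun hsq p
    exact Ideal.Quotient.mk_eq_mk_iff_sub_mem _ _ |>.1 this
  have hspan : Ideal.span {q.toPoly} ≤ RingHom.ker G := by
    rw [Ideal.span_singleton_le_iff_mem]; exact hGq
  have hGh : G.comp h = (j.comp (MvPolynomial.eval₂Hom f t)).comp h := by
    apply MvPolynomial.ringHom_ext
    · intro r
      simp [h, G]
    · intro s
      simp only [RingHom.comp_apply, h, MvPolynomial.eval₂Hom_X']
      split_ifs with hs
      · rw [map_sum, map_sum, map_sum]
        refine Finset.sum_congr rfl fun k hk => ?_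
        have := Finset.ne_of_mem_erase hk
        simp [G, y, this]
      · simp [G, y, hs]
  have hker : RingHom.ker G = (Ideal.span {q.toPoly}).radical := by
    apply le_antisymm
    · intro p hp
      have hp : G p = 0 := hp
      refine ⟨2, ?_⟩
      have h1 := hspan (hsq' p)
      have h1 : G (p ^ 2 - h p) = 0 := h1
      rw [map_sub, map_pow, hp, zero_pow two_ne_zero, zero_sub, neg_eq_zero] at h1
      have h2 := RingHom.congr_fun hGh p
      simp only [RingHom.comp_apply] at h2
      rw [h1] at h2
      have h3 : MvPolynomial.eval₂Hom f t (h p) = 0 := j.injective (by rw [← h2, map_zero])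
      have h4 : h p = 0 := hinj (by rw [h3, map_zero])
      have h5 := hsq' p
      rwa [h4, sub_zero] at h5
    · intro p hp
      obtain ⟨n, hn⟩ := hp
      have h1 : G (p ^ n) = 0 := hspan hn
      rw [map_pow] at h1
      exact eq_zero_of_pow_eq_zero h1
  let G1 : CoordRing q →+* E := Ideal.Quotient.lift _ G (fun a ha => by rw [← hker] at ha; exact ha)
  have hG1 : Function.Injective G1 := by
    rw [injective_iff_map_eq_zero]
    intro z hz
    obtain ⟨p, rfl⟩ := Ideal.Quotient.mk_surjective z
    rw [Ideal.Quotient.eq_zero_iff_mem, ← hker]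
    exact hz
  refine ⟨IsFractionRing.lift hG1, fun x => ?_, fun s => ?_⟩
  · rw [IsFractionRing.lift_algebraMap]
    change G (MvPolynomial.C x) = _
    simp [G]
  · rw [IsFractionRing.lift_algebraMap]
    change G (MvPolynomial.X s) = _
    simp [G, y]

lemma aniso_values {φ q : QF K} (h : AnisoPartOf φ q) (hq : ∀ x y, polar (toQ q) x y = 0) (x) :
    ∃ y, toQ φ y = toQ q x := by
  obtain ⟨ha, k, l, h⟩ := h
  rw [iso_def] at h
  obtain ⟨e, he⟩ := h
  set H := (osE (hyp k) (φ.orthSum (zeros l))) (e x) with hH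
  have h1 : H.1 = 0 := by
    apply hyp_ND k
    intro z
    let w := e.symm ((osE (hyp k) (φ.orthSum (zeros l))).symm (z, 0))
    have hw : osE (hyp k) (φ.orthSum (zeros l)) (e w) = (z, 0) := by simp [w]
    have h2 := hq x w
    unfold polar at h2 ⊢
    rw [← he, ← he, ← he, osE_eval, osE_eval, osE_eval, hw, map_add e, map_add, hw, ← hH] at h2
    simp only [prod_apply, Prod.fst_add, Prod.snd_add, QuadraticMap.map_zero, add_zero] at h2
    rw [← h2]; ring
  refine ⟨(osE φ (zeros l) H.2).1, ?_⟩
  rw [← he, osE_eval, ← hH, prod_apply, h1, QuadraticMap.map_zero, zero_add, osE_eval, prod_apply, zeros_eval, add_zero]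

lemma polar_diag (q : QF K) (hq : ∀ i j, i ≠ j → q.c i j = 0) (x y) : polar (toQ q) x y = 0 := by
  unfold polar
  rw [toQ_diag hq, toQ_diag hq, toQ_diag hq, ← Finset.sum_sub_distrib, ← Finset.sum_sub_distrib]
  apply Finset.sum_eq_zero
  intro i _
  rw [Pi.add_apply, CharTwo.add_sq]; ring

lemma pf_dim (l : List K) (q : QF K) : (pfTensor l q).dim = 2 ^ l.length * q.dim := by
  induction l with
  | nil => simp [pfTensor]
  | cons a l ih =>
    change (pfTensor l q).dim + (pfTensor l q).dim = _
    rw [ih, List.length_cons, pow_succ]; ring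
end I1

section I2
universe v
variable {M : Type v} [Field M] [CharP M 2]

/-- the quadratic extension by a square root, with coordinates -/
theorem exists_sqrt (f0 : M) (hf0 : ∀ m : M, m ^ 2 ≠ f0) :
    ∃ (E : Type v) (_ : Field E) (_ : Algebra M E) (θ : E), θ ^ 2 = algebraMap M E f0 ∧
      (∀ m, algebraMap M E m ≠ θ) ∧ ∀ z : E, ∃ a b : M, z = algebraMap M E a + algebraMap M E b * θ := by
  have hirr : Irreducible (Polynomial.X ^ 2 - Polynomial.C f0) := X_pow_sub_C_irreducible_of_prime Nat.prime_two hf0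
  haveI : Fact (Irreducible (Polynomial.X ^ 2 - Polynomial.C f0)) := ⟨hirr⟩
  have hθ : (AdjoinRoot.root (Polynomial.X ^ 2 - Polynomial.C f0)) ^ 2 = algebraMap M _ f0 := by
    have := AdjoinRoot.eval₂_root (Polynomial.X ^ 2 - Polynomial.C f0)
    simp only [Polynomial.eval₂_sub, Polynomial.eval₂_pow, Polynomial.eval₂_X, Polynomial.eval₂_C, sub_eq_zero] at this
    exact this
  refine ⟨AdjoinRoot (Polynomial.X ^ 2 - Polynomial.C f0), inferInstance, inferInstance, AdjoinRoot.root _, hθ, ?_, ?_⟩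
  · intro m hm
    rw [← hm, ← map_pow] at hθ
    exact hf0 m ((algebraMap M _).injective hθ)
  · intro z
    obtain ⟨p, rfl⟩ := AdjoinRoot.mk_surjective z
    have hmon : (Polynomial.X ^ 2 - Polynomial.C f0).Monic := Polynomial.monic_X_pow_sub_C f0 two_ne_zero
    set r := p %ₘ (Polynomial.X ^ 2 - Polynomial.C f0) with hr
    have h1 : AdjoinRoot.mk (Polynomial.X ^ 2 - Polynomial.C f0) p = AdjoinRoot.mk _ r := by
      rw [AdjoinRoot.mk_eq_mk, hr]
      have := Polynomial.modByMonic_add_div p (Polynomial.X ^ 2 - Polynomial.C f0)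
      exact ⟨p /ₘ (Polynomial.X ^ 2 - Polynomial.C f0), by linear_combination -this⟩
    have h2 : r.natDegree ≤ 1 := by
      have := Polynomial.natDegree_modByMonic_lt p hmon (by
        intro h; have := congrArg Polynomial.natDegree h
        rw [Polynomial.natDegree_X_pow_sub_C] at this; simp at this)
      rw [Polynomial.natDegree_X_pow_sub_C, ← hr] at this
      omega
    refine ⟨r.coeff 0, r.coeff 1, ?_⟩
    rw [h1, Polynomial.eq_X_add_C_of_natDegree_le_one h2]
    simp only [map_add, map_mul, AdjoinRoot.mk_X, AdjoinRoot.mk_C, Polynomial.coeff_add, Polynomial.coeff_C_mul]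
    simp
    rw [add_comm]

theorem graph_step {E : Type*} [Field E] [Algebra M E] (f0 : M) (θ : E) (hθ : θ ^ 2 = algebraMap M E f0)
    (hθ' : ∀ m, algebraMap M E m ≠ θ) (hE : ∀ z : E, ∃ a b : M, z = algebraMap M E a + algebraMap M E b * θ)
    (ρ : QF M) (hρ : ∀ x, toQ ρ x = 0 → x = 0) (hn : Neu (toQ (ρ.map (algebraMap M E)))) (e : Fin ρ.dim → M) :
    ∃ x : Fin ρ.dim → M, toQ ρ x = f0 * toQ ρ e := by
  haveI : CharP E 2 := charP_of_injective_ringHom (algebraMap M E).injective 2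
  have hind : ∀ a b : M, algebraMap M E a + algebraMap M E b * θ = 0 → a = 0 ∧ b = 0 := by
    intro a b h
    have hb : b = 0 := by
      by_contra hb
      have hb' : algebraMap M E b ≠ 0 := by simpa using hb
      apply hθ' (-a / b)
      rw [map_div₀, map_neg]
      field_simp
      linear_combination -h
    subst hb
    simpa using h
  let g : (M × M) →ₗ[M] E := LinearMap.coprod (Algebra.linearMap M E) (LinearMap.toSpanSingleton M E θ)
  have hg : ∀ a b, g (a, b) = algebraMap M E a + algebraMap M E b * θ := fun a b => by
    simp [g, Algebra.smul_def]
  have hgb : Function.Bijective g := by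
    constructor
    · rw [← LinearMap.ker_eq_bot, eq_bot_iff]
      rintro ⟨a, b⟩ h
      have h : g (a, b) = 0 := h
      rw [hg] at h
      obtain ⟨rfl, rfl⟩ := hind a b h
      rfl
    · intro z
      obtain ⟨a, b, rfl⟩ := hE z
      exact ⟨(a, b), hg a b⟩
  let ge := LinearEquiv.ofBijective g hgb
  have hfin : finrank M E = 2 := by
    rw [← ge.finrank_eq, finrank_prod, finrank_self]
  haveI : FiniteDimensional M E := FiniteDimensional.of_finrank_pos (by omega)
  let re : E →ₗ[M] M := (LinearMap.fst M M M).comp ge.symm.toLinearMap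
  let im : E →ₗ[M] M := (LinearMap.snd M M M).comp ge.symm.toLinearMap
  have hri : ∀ z, z = algebraMap M E (re z) + algebraMap M E (im z) * θ := fun z => by
    rw [← hg]
    exact (ge.apply_symm_apply z).symm
  obtain ⟨U, hU, hUd⟩ := hn
  rw [finrank_fin_fun] at hUd
  let π : (Fin ρ.dim → E) →ₗ[M] (Fin ρ.dim → M) := LinearMap.pi (fun i => im.comp (LinearMap.proj i))
  let UM : Submodule M (Fin ρ.dim → E) := U.restrictScalars M
  have hdecomp : ∀ u : Fin ρ.dim → E, u = bv ρ (algebraMap M E) (fun i => re (u i)) + θ • bv ρ (algebraMap M E) (fun i => im (u i)) := fun u => by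
    funext i
    change u i = algebraMap M E (re (u i)) + θ * algebraMap M E (im (u i))
    rw [mul_comm]
    exact hri (u i)
  have hval : ∀ u : Fin ρ.dim → E, toQ (ρ.map (algebraMap M E)) u = 
      algebraMap M E (toQ ρ (fun i => re (u i)) + f0 * toQ ρ (fun i => im (u i))) +
        algebraMap M E (polar (toQ ρ) (fun i => re (u i)) (fun i => im (u i))) * θ := fun u => by
    have h1 : toQ (ρ.map (algebraMap M E)) u = toQ (ρ.map (algebraMap M E)) (bv ρ (algebraMap M E) (fun i => re (u i)) + θ • bv ρ (algebraMap M E) (fun i => im (u i))) :=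
      congrArg _ (hdecomp u)
    rw [h1, QuadraticMap.map_add (toQ _), QuadraticMap.map_smul, polar_smul_right, toQ_bv, toQ_bv, polar_bv, ← pow_two, hθ]
    simp only [smul_eq_mul, map_add, map_mul]; ring
  have hinj : Function.Injective (π.domRestrict UM) := by
    rw [← LinearMap.ker_eq_bot, eq_bot_iff]
    rintro ⟨u, hu⟩ h
    have h : π u = 0 := h
    have him : (fun i => im (u i)) = 0 := h
    have h1 := hU u hu
    have h2 := (hval u).symm.trans h1
    have h3 := (hind _ _ h2).1
    rw [him, QuadraticMap.map_zero, mul_zero, add_zero] at h3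
    have h4 := hρ _ h3
    have h5 := hdecomp u
    rw [him, h4] at h5
    have hz : bv ρ (algebraMap M E) 0 = 0 := by funext i; exact map_zero _
    rw [hz, smul_zero, add_zero] at h5
    exact Subtype.ext h5
  have hsurj : LinearMap.range (π.domRestrict UM) = ⊤ := by
    apply Submodule.eq_top_of_finrank_eq
    apply le_antisymm (Submodule.finrank_le _)
    rw [LinearMap.finrank_range_of_inj hinj, finrank_fin_fun]
    have h1 : finrank M E * finrank E U = finrank M U := finrank_mul_finrank M E U
    have h2 : finrank M UM = finrank M U := rfl
    rw [h2, ← h1, hfin]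
    exact hUd
  have he : e ∈ LinearMap.range (π.domRestrict UM) := by rw [hsurj]; trivial
  obtain ⟨⟨u, hu⟩, hue⟩ := he
  have hue : (fun i => im (u i)) = e := hue
  refine ⟨fun i => re (u i), ?_⟩
  have h2 := (hval u).symm.trans (hU u hu)
  have h3 := (hind _ _ h2).1
  rw [hue] at h3
  exact CharTwo.add_eq_zero.1 h3

end I2
end WK

namespace WK
open QuadraticMap Module QF

section J1
universe u
variable {K : Type u} [Field K]

lemma nonsq {M : Type*} [Field M] {f : K →+* M} {N : ℕ} {t : Fin N → M} (h : TrExt f t) (d : Fin N → K)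
    (hd : ¬ ∃ v : Fin N → K, ∀ s, d s = v s ^ 2) (m : M) : m ^ 2 ≠ ∑ s, f (d s) * t s ^ 2 := by
  intro hm
  apply hd
  have han : An (1 : Matrix (Fin 1) (Fin 1) K) := by
    intro x hx
    rw [Qm_apply] at hx
    simp at hx
    funext i; fin_cases i; simpa using hx
  obtain ⟨v, hv, -, -⟩ := h.sub 1 1 han ∅ (fun _ => m) d (by
    rw [← hm, Qm_apply]; simp [pow_two]) (by simp)
  refine ⟨fun s => v s 0, fun s => ?_⟩
  rw [← hv s, Qm_apply]; simp [pow_two]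

lemma sum_orth {V W : Type*} [AddCommGroup V] [Module K V] (Q : QuadraticForm K V) {N : ℕ} (v : Fin N → V)
    (hv : ∀ s s', s ≠ s' → polar Q (v s) (v s') = 0) (x : Fin N → K) :
    Q (∑ s, x s • v s) = ∑ s, x s ^ 2 * Q (v s) := by
  have key : ∀ S : Finset (Fin N), Q (∑ s ∈ S, x s • v s) = ∑ s ∈ S, x s ^ 2 * Q (v s) := by
    intro S
    induction S using Finset.induction_on with
    | empty => simp
    | insert a S ha ih =>
      rw [Finset.sum_insert ha, Finset.sum_insert ha, QuadraticMap.map_add Q, ih, QuadraticMap.map_smul, smul_eq_mul]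
      have : polar Q (x a • v a) (∑ s ∈ S, x s • v s) = 0 := by
        change polarBilin Q _ _ = 0
        rw [map_sum]
        apply Finset.sum_eq_zero
        intro s hs
        rw [map_smul, map_smul, LinearMap.smul_apply]
        have := hv a s (by rintro rfl; exact ha hs)
        change polarBilin Q _ _ = 0 at this
        rw [this]; simp
      rw [this]; ring
  exact key _

variable [CharP K 2]

/-- the embedding of the base field into the function field -/
noncomputable abbrev iL (q : QF K) [IsDomain (CoordRing q)] : K →+* FunctionField q :=
  (algebraMap (CoordRing q) (FunctionField q)).comp (algebraMap K (CoordRing q))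

theorem P1 (q : QF K) [IsDomain (CoordRing q)] (hq : ∀ i j, i ≠ j → q.c i j = 0) (i0 : Fin q.dim) (h0 : q.c i0 i0 = 1)
    (hns : ¬ ∃ v : Fin q.dim → K, ∀ s, q.c s s = v s ^ 2) (ρ : QF K) (hρ : ∀ x, toQ ρ x = 0 → x = 0)
    (hn : Neu (toQ (ρ.map (iL q)))) (e : Fin ρ.dim → K) :
    ∃ t : (Fin q.dim → K) →ₗ[K] (Fin ρ.dim → K), ∀ x, toQ ρ (t x) = toQ ρ e * toQ q x := by
  obtain ⟨M, _, f, t, hT⟩ := exists_TrExt K q.dim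
  haveI : CharP M 2 := charP_of_injective_ringHom f.injective 2
  have hsq := nonsq hT _ hns
  obtain ⟨E, _, _, θ, hθ, hθ', hE⟩ := exists_sqrt _ hsq
  obtain ⟨g, hg, hg'⟩ := generic_embed q hq i0 h0 f t hT.inj (algebraMap M E) θ hθ
  have hn' := Neu.map hn g
  have heq : (ρ.map (iL q)).map g = (ρ.map f).map (algebraMap M E) := by
    simp only [QF.map]
    congr 1
    funext i j
    exact hg _
  rw [heq] at hn'
  obtain ⟨x, hx⟩ := graph_step _ θ hθ hθ' hE (ρ.map f) (hT.an _ ρ.c hρ) hn' (bv ρ f e)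
  rw [toQ_bv] at hx
  obtain ⟨v, hv, hv', -⟩ := hT.sub _ ρ.c hρ ∅ x (fun s => toQ ρ e * q.c s s) (by
    refine hx.trans ?_
    rw [Finset.sum_mul]
    refine Finset.sum_congr rfl fun s _ => ?_
    rw [_root_.map_mul]; ring) (by simp)
  refine ⟨Fintype.linearCombination K v, fun x => ?_⟩
  rw [Fintype.linearCombination_apply]
  refine (sum_orth (W := K) (Qm ρ.c) v hv' x).trans ?_
  rw [toQ_diag hq, Finset.mul_sum]
  refine Finset.sum_congr rfl fun s _ => ?_
  rw [hv]; ring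

theorem K0 (q : QF K) [IsDomain (CoordRing q)] (hq : ∀ i j, i ≠ j → q.c i j = 0) (i0 : Fin q.dim) (h0 : q.c i0 i0 = 1)
    (hns : ∃ v : Fin q.dim → K, ∀ s, q.c s s = v s ^ 2) (ρ : QF K) (hρ : ∀ x, toQ ρ x = 0 → x = 0)
    (hn : Neu (toQ (ρ.map (iL q)))) : ρ.dim = 0 := by
  obtain ⟨M, _, f, t, hT⟩ := exists_TrExt K q.dim
  haveI : CharP M 2 := charP_of_injective_ringHom f.injective 2
  obtain ⟨v, hv⟩ := hns
  obtain ⟨g, hg, hg'⟩ := generic_embed q hq i0 h0 f t hT.inj (RingHom.id M) (∑ s, f (v s) * t s) (by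
    rw [RingHom.id_apply, CharTwo.sum_sq]
    refine Finset.sum_congr rfl fun s _ => ?_
    rw [hv, map_pow]; ring)
  have hn' := Neu.map hn g
  have heq : (ρ.map (iL q)).map g = ρ.map f := by
    simp only [QF.map]
    congr 1
    funext i j
    exact hg _
  rw [heq] at hn'
  obtain ⟨U, hU, hd⟩ := hn'
  have hb : U = ⊥ := by
    rw [eq_bot_iff]
    intro x hx
    exact hT.an _ ρ.c hρ x (hU x hx)
  rw [hb] at hd
  simp at hd
  exact hd

lemma hX_aux {L : Type*} [Field L] (q : QF K) (hq : ∀ i j, i ≠ j → q.c i j = 0) (π : MvPolynomial (Fin q.dim) K →+* L)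
    (h : π q.toPoly = 0) : ∑ s, π (MvPolynomial.C (q.c s s)) * π (MvPolynomial.X s) ^ 2 = 0 := by
  rw [← h]
  unfold toPoly
  rw [map_sum]
  refine Finset.sum_congr rfl fun i _ => ?_
  rw [Finset.sum_eq_single i]
  · rw [_root_.map_mul, _root_.map_mul, pow_two]
  · intro j _ hj
    rw [hq i j (Ne.symm hj)]; simp
  · simp

lemma hX_lemma (q : QF K) [IsDomain (CoordRing q)] (hq : ∀ i j, i ≠ j → q.c i j = 0) :
    ∑ s, iL q (q.c s s) * (algebraMap (CoordRing q) (FunctionField q) (Ideal.Quotient.mk _ (MvPolynomial.X s))) ^ 2 = 0 := by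
  refine hX_aux q hq ((algebraMap (CoordRing q) (FunctionField q)).comp (Ideal.Quotient.mk _)) ?_
  have h1 : q.toPoly ∈ (Ideal.span {q.toPoly}).radical :=
    Ideal.le_radical (Ideal.subset_span (Set.mem_singleton _))
  rw [RingHom.comp_apply, Ideal.Quotient.eq_zero_iff_mem.mpr h1, _root_.map_zero]

theorem P2 (q : QF K) [IsDomain (CoordRing q)] (hq : ∀ i j, i ≠ j → q.c i j = 0) (i0 : Fin q.dim) (h0 : q.c i0 i0 = 1)
    (hns : ¬ ∃ v : Fin q.dim → K, ∀ s, q.c s s = v s ^ 2) (B : QF K) (hB : ∀ i j, i ≠ j → B.c i j = 0)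
    (β : Fin q.dim → Fin B.dim → K) (hβ : ∀ s, toQ B (β s) = q.c s s) :
    ∃ x : Fin (B.map (iL q)).dim → FunctionField q, x ≠ 0 ∧ toQ (B.map (iL q)) x = 0 := by
  haveI : CharP (FunctionField q) 2 := charP_of_injective_ringHom (iL q).injective 2
  obtain ⟨M, _, f, t, hT⟩ := exists_TrExt K q.dim
  haveI : CharP M 2 := charP_of_injective_ringHom f.injective 2
  have hsq := nonsq hT _ hns
  obtain ⟨E, _, _, θ, hθ, hθ', hE⟩ := exists_sqrt _ hsq
  obtain ⟨g, hg, hg'⟩ := generic_embed q hq i0 h0 f t hT.inj (algebraMap M E) θ hθ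
  let X : Fin q.dim → FunctionField q := fun s =>
    algebraMap (CoordRing q) (FunctionField q) (Ideal.Quotient.mk _ (MvPolynomial.X s))
  have hX : ∑ s, iL q (q.c s s) * X s ^ 2 = 0 := hX_lemma q hq
  refine ⟨fun i => ∑ s, iL q (β s i) * X s, ?_, ?_⟩
  · intro h
    have hβ0 : β i0 ≠ 0 := by
      intro h'
      have := hβ i0
      rw [h', h0, QuadraticMap.map_zero] at this
      exact zero_ne_one this
    obtain ⟨i, hi⟩ := Function.ne_iff.mp hβ0
    have h1 : g (∑ s, iL q (β s i) * X s) = 0 := (congrArg g (congrFun h i)).trans (_root_.map_zero g)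
    simp only [map_sum, _root_.map_mul] at h1
    have h2 : ∀ s, g (iL q (β s i)) * g (X s) = algebraMap M E (f (β s i) * t s) + if s = i0 then algebraMap M E (f (β s i)) * θ else 0 := by
      intro s
      rw [show g (iL q (β s i)) = _ from hg _, show g (X s) = _ from hg' s, mul_add, _root_.map_mul]
      split_ifs <;> simp
    rw [Finset.sum_congr rfl fun s _ => h2 s, Finset.sum_add_distrib, Finset.sum_ite_eq' Finset.univ i0, if_pos (Finset.mem_univ _),
      ← map_sum] at h1
    have hi' : f (β i0 i) ≠ 0 := by simpa using hi
    have hi'' : algebraMap M E (f (β i0 i)) ≠ 0 := by simpa using hi'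
    apply hθ' (-(∑ s, f (β s i) * t s) / f (β i0 i))
    rw [map_div₀, map_neg]
    field_simp
    linear_combination -h1
  · have hB' : ∀ i j, i ≠ j → (B.map (iL q)).c i j = 0 := by
      intro i j hij
      change iL q (B.c i j) = 0
      rw [hB i j hij, _root_.map_zero]
    rw [toQ_diag hB']
    have h3 : ∀ i, (B.map (iL q)).c i i * (∑ s, iL q (β s i) * X s) ^ 2 = ∑ s, iL q (B.c i i * β s i ^ 2) * X s ^ 2 := by
      intro i
      change iL q (B.c i i) * _ = _
      rw [CharTwo.sum_sq, Finset.mul_sum]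
      refine Finset.sum_congr rfl fun s _ => ?_
      rw [_root_.map_mul, map_pow]; ring
    rw [Finset.sum_congr rfl fun i _ => h3 i]
    refine Finset.sum_comm.trans ?_
    rw [← hX]
    refine Finset.sum_congr rfl fun s _ => ?_
    rw [← hβ, toQ_diag hB, map_sum, Finset.sum_mul]
    rfl
end J1
end WK

namespace WK
open QuadraticMap Module QF

section K1
variable {K : Type*} [Field K] [CharP K 2]

theorem step_sub {V : Type*} [AddCommGroup V] [Module K V] [FiniteDimensional K V] (Q : QuadraticForm K V) (hQ : ND Q)
    (l : List K) (hB : ∀ x, toQ (pfTensor l (QF.unit : QF K)) x = 0 → x = 0) (a : K) (ha : a ≠ 0)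
    (t0 : (Fin (pfTensor l (QF.unit : QF K)).dim → K) →ₗ[K] V)
    (ht0 : ∀ x, Q (t0 x) = a * toQ (pfTensor l (QF.unit : QF K)) x) :
    ∃ s : K, ∃ U : Submodule K (V × (Fin (pfTensor l (bin a (a * s ^ 2))).dim → K)),
      (∀ x ∈ U, Q x.1 + toQ (pfTensor l (bin a (a * s ^ 2))) x.2 = 0) ∧
      (pfTensor l (QF.unit : QF K)).dim + 1 ≤ finrank K U := by
  obtain ⟨χ, e0, hχ, he0, H⟩ := pf_eps l
  obtain ⟨i0, -, hd⟩ := pf_diag l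
  have hpz : ∀ x y, polar Q (t0 x) (t0 y) = 0 := by
    intro x y
    have := polar_diag _ hd x y
    unfold polar at this ⊢
    rw [← _root_.map_add, ht0, ht0, ht0, ← mul_sub, ← mul_sub, this, mul_zero]
  have hinj : LinearMap.ker t0 = ⊥ := by
    rw [LinearMap.ker_eq_bot']
    intro x hx
    have := ht0 x
    rw [hx, QuadraticMap.map_zero] at this
    exact hB x ((mul_eq_zero.mp this.symm).resolve_left ha)
  obtain ⟨r, hr⟩ := LinearMap.exists_leftInverse_of_injective t0 hinj
  obtain ⟨u, hu⟩ : ∃ u, ∀ x, polar Q u (t0 x) = χ x := by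
    refine ⟨(LinearMap.BilinForm.toDual (polarBilin Q) hQ.nondeg).symm (χ.comp r), fun x => ?_⟩
    have := LinearMap.BilinForm.apply_toDual_symm_apply (hB := hQ.nondeg) (χ.comp r) (t0 x)
    refine (this).trans ?_
    rw [LinearMap.comp_apply, ← LinearMap.comp_apply r t0, hr]; rfl
  refine ⟨Q u, ?_⟩
  obtain ⟨ε, f0, hε, hf0, hp⟩ := H a (a * (Q u) ^ 2)
  set u' := u + Q u • t0 e0 with hu'
  have hpu : ∀ x, polar Q u' (t0 x) = χ x := by
    intro x
    rw [hu', polar_add_left, polar_smul_left, hpz, smul_zero, add_zero, hu]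
  have hQu : Q u' = a * (Q u) ^ 2 := by
    rw [hu', QuadraticMap.map_add Q, QuadraticMap.map_smul, polar_smul_right, hu, hχ, ht0, he0]
    simp only [smul_eq_mul, mul_one]
    linear_combination CharTwo.add_self_eq_zero (Q u)
  let T : ((Fin (pfTensor l (QF.unit : QF K)).dim → K) × K) →ₗ[K] V × (Fin (pfTensor l (bin a (a * (Q u) ^ 2))).dim → K) :=
    LinearMap.prod (LinearMap.coprod t0 (LinearMap.toSpanSingleton K _ u'))
      (LinearMap.coprod ε (LinearMap.toSpanSingleton K _ f0))
  have hT : ∀ x m, T (x, m) = (t0 x + m • u', ε x + m • f0) := by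
    intro x m; simp [T]
  refine ⟨LinearMap.range T, ?_, ?_⟩
  · rintro _ ⟨⟨x, m⟩, rfl⟩
    rw [hT]
    simp only
    rw [QuadraticMap.map_add Q, QuadraticMap.map_add (toQ _), QuadraticMap.map_smul, QuadraticMap.map_smul, polar_smul_right, polar_smul_right,
      polar_comm, hpu, polar_comm _ _ f0, hp, hQu, hf0, ht0, hε]
    exact CharTwo.add_self_eq_zero _
  · have hTinj : Function.Injective T := by
      rw [← LinearMap.ker_eq_bot, LinearMap.ker_eq_bot']
      rintro ⟨x, m⟩ h
      rw [hT] at h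
      have h1 := congrArg Prod.fst h
      simp only [Prod.fst_zero] at h1
      have h2 : polar Q (t0 x + m • u') (t0 e0) = 0 := by rw [h1]; simp
      rw [polar_add_left, polar_smul_left, hpz, hpu, hχ] at h2
      have hm : m = 0 := by simpa using h2
      rw [hm, zero_smul, add_zero] at h1
      have hx : x = 0 := LinearMap.ker_eq_bot'.mp hinj x h1
      rw [hm, hx]; rfl
    rw [LinearMap.finrank_range_of_inj hTinj]
    simp

lemma bin_ND (a b : K) : ND (toQ (bin a b)) := by
  intro x0 hx
  let x : Fin 2 → K := x0
  change ∀ y : Fin 2 → K, polar (toQ (bin a b)) x y = 0 at hx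
  change x = 0
  have hp : ∀ y : Fin 2 → K, polar (toQ (bin a b)) x y = x 0 * y 1 + x 1 * y 0 := by
    intro y
    have e1 := toQ_bin a b (x + y)
    have e2 := toQ_bin a b x
    have e3 := toQ_bin a b y
    rw [Pi.add_apply, Pi.add_apply] at e1
    refine (congrArg₂ (· - ·) (congrArg₂ (· - ·) e1 e2) e3).trans ?_
    have h2 : (2 : K) = 0 := CharTwo.two_eq_zero
    linear_combination (a * x 0 * y 0 + b * x 1 * y 1) * h2
  have h0 := (hp ![0, 1]).symm.trans (hx _)
  have h1 := (hp ![1, 0]).symm.trans (hx _)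
  simp at h0 h1
  funext i
  fin_cases i
  · exact h0
  · exact h1
end K1

section K2
variable {F K L : Type*} [Field F] [Field K] [Field L] [CharP F 2]

lemma map_bin (f : F →+* K) (a b : F) : (bin a b).map f = bin (f a) (f b) := by
  unfold QF.map bin
  congr 1
  funext i j
  fin_cases i <;> fin_cases j <;> simp

theorem main_claim (f : F →+* K) (hK : ∀ x : K, ∃ y : F, f y = x ^ 2) (g : K →+* L) (l0 : List F) (hl0 : ∀ a ∈ l0, a ≠ 0)
    (P1' : ∀ ρ : QF K, (∀ x, toQ ρ x = 0 → x = 0) → Neu (toQ (ρ.map g)) → ∀ e : Fin ρ.dim → K,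
      ∃ t0 : (Fin (pfTensor (l0.map f) (QF.unit : QF K)).dim → K) →ₗ[K] (Fin ρ.dim → K),
        ∀ x, toQ ρ (t0 x) = toQ ρ e * toQ (pfTensor (l0.map f) (QF.unit : QF K)) x)
    (hB : ∀ x, toQ (pfTensor (l0.map f) (QF.unit : QF K)) x = 0 → x = 0)
    (hneu : ∀ τ : QF F, Neu (toQ ((pfTensor l0 τ).map (g.comp f)))) :
    ∀ ρ : QF F, ND (toQ ρ) → Neu (toQ (ρ.map (g.comp f))) →
      ∃ τ : QF F, ND (toQ τ) ∧ Neu ((toQ (ρ.map f)).prod (toQ ((pfTensor l0 τ).map f))) := by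
  haveI : CharP K 2 := charP_of_injective_ringHom f.injective 2
  haveI : CharP L 2 := charP_of_injective_ringHom g.injective 2
  suffices H : ∀ d : ℕ, ∀ ρ : QF F, ρ.dim = d → ND (toQ ρ) → Neu (toQ (ρ.map (g.comp f))) →
      ∃ τ : QF F, ND (toQ τ) ∧ Neu ((toQ (ρ.map f)).prod (toQ ((pfTensor l0 τ).map f))) from
    fun ρ => H _ ρ rfl
  intro d
  induction d using Nat.strong_induction_on with
  | _ d ih =>
  intro ρ hdim hρ hn
  by_cases hd : d = 0
  · subst hd
    refine ⟨nil, ?_, ?_⟩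
    · intro x _
      exact Subsingleton.elim (α := Fin 0 → F) _ _
    · refine ⟨⊥, ?_, ?_⟩
      · intro x hx
        rw [Submodule.mem_bot] at hx
        rw [hx, QuadraticMap.map_zero]
      · have h1 : ((pfTensor l0 (nil : QF F)).map f).dim = 0 := by
          change (pfTensor l0 (nil : QF F)).dim = 0
          rw [pf_dim]; rfl
        have h2 : (ρ.map f).dim = 0 := hdim
        rw [finrank_prod]
        simp [h1, h2]
  by_cases hA : ∀ x, toQ (ρ.map f) x = 0 → x = 0
  · -- anisotropic case
    let e : Fin ρ.dim → F := fun _ => 1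
    have he : bv ρ f e ≠ 0 := by
      intro h
      have := congrFun h (⟨0, by change 0 < ρ.dim; omega⟩)
      exact one_ne_zero ((_root_.map_one f).symm.trans this)
    set a := toQ ρ e with ha
    have ha0 : f a ≠ 0 := by
      intro h
      exact he (hA _ ((toQ_bv ρ f e).trans h))
    obtain ⟨t0, ht0⟩ := P1' (ρ.map f) hA hn (bv ρ f e)
    obtain ⟨s, U, hU, hUd⟩ := step_sub (toQ (ρ.map f)) (hρ.map f) (l0.map f) hB (f a) ha0 t0
      (fun x => by rw [ht0, toQ_bv])
    obtain ⟨s', hs'⟩ := hK s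
    let P := pfTensor l0 (bin a (a * s'))
    have hP : P.map f = pfTensor (l0.map f) (bin (f a) (f a * s ^ 2)) := by
      simp only [P]
      rw [map_pfTensor, map_bin, _root_.map_mul, hs']
    have hPND : ND (toQ P) := pfTensor_ND hl0 (bin_ND _ _)
    have hΦ : (ρ.orthSum P).map f = (ρ.map f).orthSum (pfTensor (l0.map f) (bin (f a) (f a * s ^ 2))) := by
      rw [map_orthSum, hP]
    have hU' : ∃ U' : Submodule K (Fin ((ρ.orthSum P).map f).dim → K),
        (∀ x ∈ U', toQ ((ρ.orthSum P).map f) x = 0) ∧ (pfTensor (l0.map f) (QF.unit : QF K)).dim + 1 ≤ finrank K U' := by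
      rw [hΦ]
      refine ⟨U.map (osE _ _).symm.toLinearMap, ?_, ?_⟩
      · rintro _ ⟨x, hx, rfl⟩
        refine (osE_symm_eval _ _ x.1 x.2).trans (hU x hx)
      · rw [LinearEquiv.finrank_map_eq]
        exact hUd
    obtain ⟨U', hU1, hU2⟩ := hU'
    obtain ⟨ρ1, hρ1, hρ1d, hρ1n⟩ := excellence_sub f hK _ (ρ.orthSum P) (ND_orthSum.2 (hρ.prod hPND)) U' hU1 hU2
    have hdim1 : ρ1.dim < d := by
      have e1 : (pfTensor (l0.map f) (QF.unit : QF K)).dim = 2 ^ l0.length * 1 := by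
        rw [pf_dim, List.length_map]; rfl
      have e2 : P.dim = 2 ^ l0.length * 2 := pf_dim _ _
      have e3 : (ρ.orthSum P).dim = ρ.dim + P.dim := rfl
      rw [e1, e3, e2] at hρ1d
      omega
    have hρ1L : Neu (toQ (ρ1.map (g.comp f))) := by
      have h1 : Neu ((toQ ((ρ.orthSum P).map (g.comp f))).prod (toQ (ρ1.map (g.comp f)))) := hρ1n.map_prod g
      refine Neu.cancel ?_ h1.symm ?_
      · exact (ND_orthSum.2 (hρ.prod hPND)).map _
      · rw [map_orthSum]
        exact Neu_orthSum.2 (hn.prod (hneu _))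
    obtain ⟨τ1, hτ1, hτn⟩ := ih _ hdim1 ρ1 rfl hρ1 hρ1L
    refine ⟨(bin a (a * s')).orthSum τ1, ND_orthSum.2 ((bin_ND _ _).prod hτ1), ?_⟩
    have h2 := Neu.trans (hρ1.map f) hρ1n hτn
    obtain ⟨e', he'⟩ := pf_orthSum (l0.map f) ((bin a (a * s')).map f) (τ1.map f)
    rw [map_orthSum] at h2
    rw [map_pfTensor, map_orthSum]
    have hP' : P.map f = pfTensor (l0.map f) ((bin a (a * s')).map f) := map_pfTensor _ _ _
    rw [hP', map_pfTensor] at h2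
    refine h2.of_equiv (((osE _ _).prodCongr (LinearEquiv.refl K _)).trans ((LinearEquiv.prodAssoc K _ _ _).trans
      ((LinearEquiv.refl K _).prodCongr e'.symm))) ?_
    rintro ⟨x, y⟩
    simp only [QuadraticMap.prod_apply]
    rw [osE_eval, QuadraticMap.prod_apply, add_assoc]
    refine congrArg₂ (· + ·) rfl ?_
    rw [he']
    simp
  · -- isotropic case
    push Not at hA
    obtain ⟨z, hz, hz0⟩ := hA
    obtain ⟨ρ', h1, h2, h3, -⟩ := excellence f hK ρ hρ z hz0 hz
    have hL : Neu (toQ (ρ'.map (g.comp f))) := by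
      have h4 : Neu ((toQ (ρ.map (g.comp f))).prod (toQ (ρ'.map (g.comp f)))) := h3.map_prod g
      exact Neu.cancel (hρ.map _) h4.symm hn
    obtain ⟨τ, hτ, hτn⟩ := ih ρ'.dim (by omega) ρ' rfl h1 hL
    exact ⟨τ, hτ, Neu.trans (h1.map f) h3 hτn⟩
end K2
end WK

namespace WK
open QuadraticMap Module QF

section L1
universe u w
variable {F : Type w} {K : Type u} [Field F] [Field K] [Algebra F K] [CharP F 2]

lemma sublist_ofFn {n k : ℕ} (a : Fin n → F) (f : Fin k → Fin n) (hf : StrictMono f) :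
    (List.ofFn (a ∘ f)).Sublist (List.ofFn a) := by
  rw [List.sublist_iff_exists_fin_orderEmbedding_get_eq]
  have h1 : (List.ofFn (a ∘ f)).length = k := List.length_ofFn
  have h2 : (List.ofFn a).length = n := List.length_ofFn
  refine ⟨OrderEmbedding.ofStrictMono (fun i => Fin.cast h2.symm (f (Fin.cast h1 i))) ?_, ?_⟩
  · intro i j hij
    exact hf hij
  · intro i
    simp
    rfl

/-- a Pfister form whose diagonal entries are squares is a square of a linear form -/
lemma sq_dim (q B : QF K) [CharP K 2] (hq : ∀ i j, i ≠ j → q.c i j = 0) (v : Fin q.dim → K) (hv : ∀ s, q.c s s = v s ^ 2)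
    (hB : ∀ x, toQ B x = 0 → x = 0) (s : (Fin B.dim → K) →ₗ[K] (Fin q.dim → K)) (hs : ∀ x, toQ q (s x) = toQ B x) :
    B.dim ≤ 1 := by
  let ℓ : (Fin q.dim → K) →ₗ[K] K := Fintype.linearCombination K v
  have hℓ : ∀ x, toQ q x = (ℓ x) ^ 2 := by
    intro x
    rw [toQ_diag hq, Fintype.linearCombination_apply, CharTwo.sum_sq]
    refine Finset.sum_congr rfl fun i _ => ?_
    rw [hv, smul_eq_mul]; ring
  have hinj : Function.Injective (ℓ.comp s) := by
    rw [← LinearMap.ker_eq_bot, LinearMap.ker_eq_bot']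
    intro x hx
    apply hB
    rw [← hs, hℓ]
    rw [LinearMap.comp_apply] at hx
    rw [hx]; simp
  have := LinearMap.finrank_le_finrank_of_injective hinj
  simpa using this

theorem final0 (f : F →+* K)
    (hK : ∀ x : K, ∃ y : F, f y = x ^ 2)
    (l l0 : List F) (hl0 : ∀ a ∈ l0, a ≠ 0) (hsub : l0.Sublist l) (q : QF K)
    (hqdef : q = (pfTensor l QF.unit).map f)
    (hB0 : AnisoPartOf ((pfTensor l0 QF.unit).map f) q)
    [IsDomain (CoordRing q)] :
    (l0 = [] → ∀ φ : QF F, φ.Nonsingular →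
      (Hyperbolic (φ.map ((iL q).comp f)) ↔ Hyperbolic (φ.map f))) ∧
    (1 ≤ l0.length → ∀ φ : QF F, φ.Nonsingular →
      (Hyperbolic (φ.map ((iL q).comp f)) ↔
        ∃ ψ τ : QF F, ψ.Nonsingular ∧ Hyperbolic (ψ.map f) ∧
          τ.Nonsingular ∧
          WittEquiv φ (ψ.orthSum (pfTensor l0 τ)))) := by
  haveI : CharP K 2 := charP_of_injective_ringHom f.injective 2
  haveI : CharP (FunctionField q) 2 := charP_of_injective_ringHom (iL q).injective 2
  obtain ⟨hq, i0, h0⟩ : (∀ i j, i ≠ j → q.c i j = 0) ∧ ∃ i0, q.c i0 i0 = 1 := by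
    obtain ⟨i0, h0, hd⟩ := pf_diag l
    rw [hqdef]
    refine ⟨fun i j hij => ?_, i0, ?_⟩
    · change f _ = 0
      rw [hd i j hij, _root_.map_zero]
    · change f _ = 1
      rw [h0, _root_.map_one]
  have hB0' : (pfTensor l0 QF.unit).map f = pfTensor (l0.map f) QF.unit := by rw [map_pfTensor, map_unit]
  have hqq : q = pfTensor (l.map f) QF.unit := by rw [hqdef, map_pfTensor, map_unit]
  rw [hB0'] at hB0
  have hβ : ∀ s, ∃ y, toQ (pfTensor (l0.map f) QF.unit) y = q.c s s := by
    intro s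
    obtain ⟨y, hy⟩ := aniso_values hB0 (polar_diag q hq) (Pi.single s 1)
    refine ⟨y, hy.trans ?_⟩
    rw [toQ_diag hq, Finset.sum_eq_single s]
    · simp
    · intro j _ hj
      simp [Pi.single_eq_of_ne hj]
    · simp
  have han : ∀ x, toQ (pfTensor (l0.map f) (QF.unit : QF K)) x = 0 → x = 0 := by
    intro x hx
    exact hB0.1 x (by rw [toQ_apply] at hx; exact hx)
  constructor
  · intro hl φ hφ
    rw [nonsing_iff] at hφ
    rw [hyperbolic_iff (hφ.map _), hyperbolic_iff (hφ.map _)]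
    constructor
    · intro h
      obtain ⟨φ', hφ', ha, hn⟩ := exists_aniso f hK φ hφ
      have h1 : Neu ((toQ (φ.map ((iL q).comp f))).prod (toQ (φ'.map ((iL q).comp f)))) := hn.map_prod (iL q)
      have h2 : Neu (toQ ((φ'.map f).map (iL q))) := Neu.cancel (hφ.map _) h1.symm h
      have hsq : ∃ v : Fin q.dim → K, ∀ s, q.c s s = v s ^ 2 := by
        choose β hβ using hβ
        subst hl
        refine ⟨fun s => β s (⟨0, Nat.one_pos⟩ : Fin 1), fun s => ?_⟩
        rw [← hβ]
        exact toQ_unit _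
      have h3 := K0 q hq i0 h0 hsq (φ'.map f) ha h2
      refine Neu.cancel (hφ'.map f) hn ?_
      refine ⟨⊥, ?_, ?_⟩
      · intro x hx
        rw [Submodule.mem_bot] at hx
        rw [hx, QuadraticMap.map_zero]
      · simp [h3]
    · intro h
      exact Neu.map h (iL q)
  · intro hlen φ hφ
    rw [nonsing_iff] at hφ
    rw [hyperbolic_iff (hφ.map _)]
    have hsl := pf_sublist (hsub.map f) (QF.unit : QF K)
    rw [← hqq] at hsl
    obtain ⟨s, hs⟩ := hsl
    have hns : ¬ ∃ v : Fin q.dim → K, ∀ s, q.c s s = v s ^ 2 := by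
      rintro ⟨v, hv⟩
      have := sq_dim q (pfTensor (l0.map f) QF.unit) hq v hv han s hs
      have e1 : (pfTensor (l0.map f) (QF.unit : QF K)).dim = 2 ^ l0.length * 1 := by
        rw [pf_dim, List.length_map]; rfl
      have e2 : 2 ^ 1 ≤ 2 ^ l0.length := Nat.pow_le_pow_right (by norm_num) hlen
      omega
    have hneu : ∀ τ : QF F, Neu (toQ ((pfTensor l0 τ).map ((iL q).comp f))) := by
      intro τ
      choose β hβ using hβ
      obtain ⟨-, -, hd⟩ := pf_diag (l0.map f)
      have h2 := P2 q hq i0 h0 hns (pfTensor (l0.map f) QF.unit) hd β hβ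
      rw [map_pfTensor, map_unit] at h2
      obtain ⟨x, hx0, hx⟩ := h2
      have h3 := pf_neutral _ ((τ.map f).map (iL q)) x hx0 hx
      rw [← map_pfTensor, ← map_pfTensor] at h3
      exact h3
    constructor
    · intro h
      obtain ⟨τ, hτ, hn⟩ := main_claim f hK (iL q) l0 hl0 (by
        intro ρ hρ hρn e
        obtain ⟨t, ht⟩ := P1 q hq i0 h0 hns ρ hρ hρn e
        exact ⟨t.comp s, fun x => by rw [LinearMap.comp_apply, ht, hs]⟩) han hneu φ hφ h
      have hP : ND (toQ (pfTensor l0 τ)) := pfTensor_ND hl0 hτ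
      have hψ : ND (toQ (φ.orthSum (pfTensor l0 τ))) := ND_orthSum.2 (hφ.prod hP)
      refine ⟨φ.orthSum (pfTensor l0 τ), τ, (nonsing_iff _).2 hψ, ?_, (nonsing_iff _).2 hτ, WittEquiv_add_twice _ _ hP⟩
      rw [hyperbolic_iff (hψ.map f), map_orthSum]
      exact Neu_orthSum.2 hn
    · rintro ⟨ψ, τ, hψ, hψh, hτ, hW⟩
      rw [nonsing_iff] at hψ hτ
      rw [hyperbolic_iff (hψ.map _)] at hψh
      have hP : ND (toQ (pfTensor l0 τ)) := pfTensor_ND hl0 hτ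
      have h1 := (Neu_of_WittEquiv hW).map_prod ((iL q).comp f)
      refine Neu.cancel ((ND_orthSum.2 (hψ.prod hP)).map _) h1 ?_
      rw [map_orthSum]
      exact Neu_orthSum.2 (Neu.prod (hψh.map (iL q)) (hneu τ))
end L1
end WK

open QF in
/-- Let `F` have characteristic 2, `K/F` purely inseparable of
exponent 1 (`K² ⊆ F`), `B = ⟨⟨a₁,…,aₙ⟩⟩_b` (`n ≥ 1`, `aᵢ ∈ F*`) a bilinear Pfister form
with associated totally singular quadratic form `q = ⟨⟨a₁,…,aₙ⟩⟩`, and let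
`i₁ < … < i_k` (a strictly monotone `f : Fin k → Fin n`) be such that
`(q_K)_an ≅ (⟨⟨a_{i₁},…,a_{i_k}⟩⟩)_K`; put `B₀ = ⟨⟨a_{i₁},…,a_{i_k}⟩⟩_b` (of dimension
`2^k`).  Let `L = K(B)` be the function field over `K` of the quadric `q = 0`.
If `dim B₀ = 1` (i.e. `k = 0`) then `W_q(L/F) = W_q(K/F)`; if `dim B₀ > 1`
(i.e. `k ≥ 1`) then `W_q(L/F) = W_q(K/F) + B₀ ⊗ W_q(F)`. -/
theorem wittKernel_functionField_bilinear_pfister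
    (F K : Type*) [Field F] [Field K] [Algebra F K] [CharP F 2]
    (hK : ∀ x : K, ∃ y : F, algebraMap F K y = x ^ 2)
    (n : ℕ) (hn : 1 ≤ n) (a : Fin n → F) (ha : ∀ i, a i ≠ 0)
    (k : ℕ) (f : Fin k → Fin n) (hf : StrictMono f)
    (hB0 : AnisoPartOf ((pfTensor (List.ofFn (a ∘ f)) unit).map (algebraMap F K))
      ((pfTensor (List.ofFn a) unit).map (algebraMap F K)))
    [IsDomain (CoordRing ((pfTensor (List.ofFn a) unit).map (algebraMap F K)))] :
    (k = 0 → ∀ φ : QF F, φ.Nonsingular →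
      (Hyperbolic (φ.map (toFunctionField (F := F)
          ((pfTensor (List.ofFn a) unit).map (algebraMap F K)))) ↔
        Hyperbolic (φ.map (algebraMap F K)))) ∧
    (1 ≤ k → ∀ φ : QF F, φ.Nonsingular →
      (Hyperbolic (φ.map (toFunctionField (F := F)
          ((pfTensor (List.ofFn a) unit).map (algebraMap F K)))) ↔
        ∃ ψ τ : QF F, ψ.Nonsingular ∧ Hyperbolic (ψ.map (algebraMap F K)) ∧
          τ.Nonsingular ∧
          WittEquiv φ (ψ.orthSum (pfTensor (List.ofFn (a ∘ f)) τ)))) := by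
  have hl0 : ∀ b ∈ List.ofFn (a ∘ f), b ≠ 0 := by
    intro b hb
    rw [List.mem_ofFn] at hb
    obtain ⟨i, rfl⟩ := hb
    exact ha _
  obtain ⟨h1, h2⟩ := WK.final0 (algebraMap F K) hK (List.ofFn a) (List.ofFn (a ∘ f)) hl0 (WK.sublist_ofFn a f hf) _ rfl hB0
  refine ⟨fun hk => h1 ?_, fun hk => h2 ?_⟩
  · subst hk; exact List.ofFn_zero
  · rw [List.length_ofFn]; exact hk
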